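/- Let Λ be a cyclic Nakayama artin algebra of infinite global dimension. Then the φ-dimension of Λ (the supremum of the Igusa–Todorov φ-function over all finitely generated Λ-modules) is an even number. -/

import Mathlib

/-!
An indecomposable module over a cyclic Nakayama algebra is determined by its top `S a` and its
length, that is, by an interval `[a, b)` of integers up to translation by `N`. Put
`f x = x + c (x mod N)` (`push`); it is monotone because `c i ≤ c (i + 1) + 1`. The interval
`[a, b)` is projective exactly when `b = f a`, and `Ω[a, b) = [b, f a)`, so that
`Ω²[a, b) = [f a, f b)`. Thus `Ω` becomes a self-map `step` of a finite pointed set `State`, the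
base point standing for the projective modules.

*The `φ`-dimension is the transient length of `step`.* The classes in `K0` of the nonprojective
indecomposables are linearly independent: the function `mult X`, comparing the traces in `M` of
all maps and of the non-split maps out of `X`, is additive, vanishes on projectives and on
indecomposables other than `X`, and is positive on `X` (`linearIndependent_stateMod`). Hence the
rank of `L^t⟨add M⟩` counts the states other than the base point among the `t`-th images of the
summands of `M`. This count is constant once all states have become periodic, and a sum of at most
two indecomposables witnesses the last drop (`exists_cnt_lt`, `phiDim_eq`).

*The transient length is even* (`even_transient`). Let `E` be the set of integers whose residue
modulo `N` is periodic under `f`; on `E` the map `f` is a strictly increasing bijection, and a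
nonprojective interval is periodic if and only if both of its end points lie in `E`. If the
transient length were `2m + 1`, then every interval with end points in `R = f^m(ℤ)` would have a
periodic syzygy, while some interval `[a, b)` with end points in `R` would not be periodic. When
`f a` lies in `E`, some point of `R` outside `E` has the same image as a point `e` of `E`, which
forces `f p = e` for the predecessor `p` of `e` in `E`; then no interval with end points in `E` is
nonprojective and the global dimension is finite. When `f a` is not in `E`, the first `e` in `E`
with `f a < f e` lies above `f a`, whereas its predecessor `p` satisfies `f p ≤ f a < e`, so
`f p ≤ p`, which is impossible. This is the lemma `key`.
-/

/-!
Common definitions: Igusa–Todorov φ-function, syzygies, and cyclic Nakayama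
algebras presented by monomial relations, following E. Sen,
"The φ-dimension of cyclic Nakayama algebras".
-/

noncomputable section

namespace PhiDim

variable (Λ : Type) [Ring Λ]

/-- A module is *uniserial* if its submodules are totally ordered by inclusion. -/
def IsUniserial (M : ModuleCat.{0} Λ) : Prop :=
  ∀ N₁ N₂ : Submodule Λ M, N₁ ≤ N₂ ∨ N₂ ≤ N₁

/-- A module is *indecomposable* if it is nonzero and admits no nontrivial
direct sum decomposition. -/
def Indec (M : ModuleCat.{0} Λ) : Prop :=
  Nontrivial M ∧ ∀ N N' : Submodule Λ M, IsCompl N N' → N = ⊥ ∨ N' = ⊥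

/-- `X` is (isomorphic to) a direct summand of `M`. -/
def IsSummand (X M : ModuleCat.{0} Λ) : Prop :=
  ∃ N N' : Submodule Λ M, IsCompl N N' ∧ Nonempty (X ≃ₗ[Λ] N)

/-- `f : P → M` is a projective cover: `P` is projective, `f` is surjective and
its kernel is superfluous in `P`. -/
def IsProjCover {P M : ModuleCat.{0} Λ} (f : P →ₗ[Λ] M) : Prop :=
  Module.Projective Λ P ∧ Function.Surjective f ∧
    ∀ N : Submodule Λ P, N ⊔ LinearMap.ker f = ⊤ → N = ⊤

/-- `Y` is (isomorphic to) the first syzygy `Ω M`, i.e. the kernel of a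
projective cover of `M`. -/
def IsSyzygy (Y M : ModuleCat.{0} Λ) : Prop :=
  ∃ (P : ModuleCat.{0} Λ) (f : P →ₗ[Λ] M), IsProjCover Λ f ∧
    Nonempty (Y ≃ₗ[Λ] LinearMap.ker f)

/-- `Y` is (isomorphic to) the `n`-th syzygy `Ω^n M`. -/
def IsNthSyzygy : ℕ → ModuleCat.{0} Λ → ModuleCat.{0} Λ → Prop
  | 0, Y, M => Nonempty (Y ≃ₗ[Λ] M)
  | n + 1, Y, M => ∃ Z : ModuleCat.{0} Λ, IsSyzygy Λ Z M ∧ IsNthSyzygy n Y Z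

/-- `M` is `Ω`-periodic: `Ω^k M ≅ M` for some `k ≥ 1`. -/
def IsPeriodic (M : ModuleCat.{0} Λ) : Prop :=
  ∃ k : ℕ, 1 ≤ k ∧ IsNthSyzygy Λ k M M

/-- Projective dimension at most `n` (via minimal projective resolutions:
the `n`-th syzygy is projective). -/
def PdimLE (M : ModuleCat.{0} Λ) (n : ℕ) : Prop :=
  ∃ Y : ModuleCat.{0} Λ, IsNthSyzygy Λ n Y M ∧ Module.Projective Λ Y

/-- `M` has infinite projective dimension. -/
def HasInfinitePdim (M : ModuleCat.{0} Λ) : Prop :=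
  ¬ ∃ n : ℕ, PdimLE Λ M n

/-- The (left) global dimension is at most `n`: every finitely generated module
has projective dimension at most `n`. -/
def GlobalDimLE (n : ℕ) : Prop :=
  ∀ M : ModuleCat.{0} Λ, Module.Finite Λ M → PdimLE Λ M n

/-- `Λ` has infinite global dimension. -/
def HasInfiniteGlobalDim : Prop := ¬ ∃ n : ℕ, GlobalDimLE Λ n

/-- `M` has composition length `n`. -/
def HasLength (M : ModuleCat.{0} Λ) (n : ℕ) : Prop :=
  ∃ s : CompositionSeries (Submodule Λ M), s.head = ⊥ ∧ s.last = ⊤ ∧ s.length = n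

/-- The socle of a uniserial module: the smallest nonzero submodule. -/
def socle (M : Type) [AddCommGroup M] [Module Λ M] : Submodule Λ M :=
  sInf {N : Submodule Λ M | N ≠ ⊥}

/-- The radical of a uniserial (local) module: the largest proper submodule. -/
def radical (M : Type) [AddCommGroup M] [Module Λ M] : Submodule Λ M :=
  sSup {N : Submodule Λ M | N ≠ ⊤}

/-- `soc M ≅ T`. -/
def SocIso (M T : ModuleCat.{0} Λ) : Prop :=
  Nonempty (socle Λ M ≃ₗ[Λ] T)

/-- `top M = M / rad M ≅ T`. -/
def TopIso (M T : ModuleCat.{0} Λ) : Prop :=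
  Nonempty ((M ⧸ radical Λ M) ≃ₗ[Λ] T)

/-- `T` is a composition factor (a simple subquotient) of `M`. -/
def IsCompFactorOf (T M : ModuleCat.{0} Λ) : Prop :=
  ∃ (N₁ : Submodule Λ M) (N₀ : Submodule Λ N₁),
    Nonempty ((N₁ ⧸ N₀) ≃ₗ[Λ] T)

/-- The number of composition factors of a composition series `s` of `M`
isomorphic to `T`. -/
def factorCount (M : ModuleCat.{0} Λ) (s : CompositionSeries (Submodule Λ M))
    (T : ModuleCat.{0} Λ) : ℕ :=
  Nat.card {i : Fin s.length //
    Nonempty ((s i.succ ⧸ Submodule.comap (s i.succ).subtype (s i.castSucc)) ≃ₗ[Λ] T)}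

/-! ### The Igusa–Todorov function φ -/

/-- Finitely generated modules. -/
def FGMod := {M : ModuleCat.{0} Λ // Module.Finite Λ M}

/-- Generators of the relations defining `K₀`: `[C] - [A] - [B]` for `C ≅ A ⊕ B`,
and `[P]` for `P` projective. -/
def K0RelSet : Set (FreeAbelianGroup (FGMod Λ)) :=
  {x | ∃ A B C : FGMod Λ, Nonempty ((C.1 : Type) ≃ₗ[Λ] ((A.1 : Type) × (B.1 : Type))) ∧
        x = FreeAbelianGroup.of C - FreeAbelianGroup.of A - FreeAbelianGroup.of B} ∪
  {x | ∃ P : FGMod Λ, Module.Projective Λ P.1 ∧ x = FreeAbelianGroup.of P}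

def K0Rel : AddSubgroup (FreeAbelianGroup (FGMod Λ)) :=
  AddSubgroup.closure (K0RelSet Λ)

/-- `K₀`: the free abelian group on finitely generated modules, modulo
`[A ⊕ B] = [A] + [B]` and `[P] = 0` for projective `P`. -/
def K0 := FreeAbelianGroup (FGMod Λ) ⧸ K0Rel Λ

instance : AddCommGroup (K0 Λ) := QuotientAddGroup.Quotient.addCommGroup _

/-- The class `[M]` of a finitely generated module in `K₀`. -/
def classOf (M : FGMod Λ) : K0 Λ := QuotientAddGroup.mk (FreeAbelianGroup.of M)

/-- Generators of the subgroup `L^t ⟨add M⟩` of `K₀`: classes of `t`-th syzygies of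
the indecomposable direct summands of `M`. -/
def addGens (M : ModuleCat.{0} Λ) (t : ℕ) : Set (K0 Λ) :=
  {k | ∃ X : ModuleCat.{0} Λ, Indec Λ X ∧ IsSummand Λ X M ∧
        ∃ Y : FGMod Λ, IsNthSyzygy Λ t Y.1 X ∧ k = classOf Λ Y}

/-- The rank of `L^t ⟨add M⟩`. -/
def syzygyRank (M : ModuleCat.{0} Λ) (t : ℕ) : Cardinal :=
  Module.rank ℤ (AddSubgroup.closure (addGens Λ M t))

/-- The Igusa–Todorov function
`φ(M) = min { t | rank L^t ⟨add M⟩ = rank L^{t+j} ⟨add M⟩ for all j ≥ 1 }`. -/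
def phi (M : ModuleCat.{0} Λ) : ℕ :=
  sInf {t : ℕ | ∀ j : ℕ, 1 ≤ j → syzygyRank Λ M (t + j) = syzygyRank Λ M t}

/-- `φdim Λ = sup { φ(M) | M a finitely generated Λ-module }`. -/
def phiDim : ℕ∞ := ⨆ M : FGMod Λ, (phi Λ M.1 : ℕ∞)

/-- Isomorphism of modules as a setoid on `ModuleCat Λ`. -/
def isoSetoid : Setoid (ModuleCat.{0} Λ) where
  r M N := Nonempty (M ≃ₗ[Λ] N)
  iseqv := ⟨fun M => ⟨LinearEquiv.refl Λ M⟩, fun ⟨e⟩ => ⟨e.symm⟩, fun ⟨e⟩ ⟨f⟩ => ⟨e.trans f⟩⟩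

/-- `α(X)`: the number of pairwise non-isomorphic, non-projective, indecomposable
direct summands of `X`. -/
def alpha (X : ModuleCat.{0} Λ) : ℕ :=
  Nat.card {c : Quotient (isoSetoid Λ) // ∃ Y : ModuleCat.{0} Λ,
    Quotient.mk (isoSetoid Λ) Y = c ∧ Indec Λ Y ∧ ¬ Module.Projective Λ Y ∧ IsSummand Λ Y X}

/-! ### Cyclic Nakayama algebras presented by monomial relations -/

/-- A cyclic Nakayama artin algebra `Λ` on `N ≥ 3` vertices, presented by an
irredundant system of `r` monomial relations `α_{k_{2j}} ⋯ α_{k_{2j-1}} = 0`.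

* `S i` (for `i : ZMod N`) are the simple modules attached to the vertices of the
  cyclic quiver, `P i` a projective cover of `S i`, and `c i` the composition length
  of `P i` (the Kupisch series).
* `layer` expresses that the arrows of the quiver are exactly `α_i : i → i+1`:
  the radical of an indecomposable module with top `S i`, when nonzero, has top `S (i+1)`.
* `kOdd j = k_{2j-1}` and `kEven j = k_{2j}` record the start and end indices of the
  `j`-th relation; irredundancy and completeness of the system of relations is recorded
  by `relation_starts` (the chain of inclusions `P_v ↪ P_{v-1}` breaks exactly at the
  starting vertices of the relations); `relation_ends` says that the `j`-th relation
  is a path from `k_{2j-1}` to `k_{2j} + 1` consisting of `c (k_{2j-1})` arrows. -/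
structure CyclicNakayama (R : Type) (Λ : Type) [CommRing R] [Ring Λ] [Algebra R Λ] where
  artinianBase : IsArtinianRing R
  finiteAlgebra : Module.Finite R Λ
  N : ℕ
  three_le_N : 3 ≤ N
  r : ℕ
  one_le_r : 1 ≤ r
  S : ZMod N → ModuleCat.{0} Λ
  S_simple : ∀ i, IsSimpleModule Λ (S i)
  S_complete : ∀ T : ModuleCat.{0} Λ, IsSimpleModule Λ T → ∃ i, Nonempty (T ≃ₗ[Λ] S i)
  S_distinct : ∀ i j, Nonempty (S i ≃ₗ[Λ] S j) → i = j
  nakayama : ∀ M : ModuleCat.{0} Λ, Module.Finite Λ M → Indec Λ M → IsUniserial Λ M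
  P : ZMod N → ModuleCat.{0} Λ
  P_finite : ∀ i, Module.Finite Λ (P i)
  P_projective : ∀ i, Module.Projective Λ (P i)
  P_cover : ∀ i, ∃ f : P i →ₗ[Λ] S i, IsProjCover Λ f
  c : ZMod N → ℕ
  P_length : ∀ i, HasLength Λ (P i) (c i)
  two_le_c : ∀ i, 2 ≤ c i
  layer : ∀ M : ModuleCat.{0} Λ, Module.Finite Λ M → Indec Λ M → ∀ i : ZMod N,
    TopIso Λ M (S i) → radical Λ M ≠ ⊥ →
      TopIso Λ (ModuleCat.of Λ (radical Λ M)) (S (i + 1))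
  kOdd : ZMod r → ZMod N
  kEven : ZMod r → ZMod N
  kOdd_mono : ∀ j j' : ZMod r, j.val < j'.val → (kOdd j).val < (kOdd j').val
  relation_starts : ∀ v : ZMod N, (∃ j, kOdd j = v) ↔ c v ≠ c (v + 1) + 1
  relation_ends : ∀ j, kEven j + 1 = kOdd j + (c (kOdd j) : ZMod N)
  soc_min : ∀ j, SocIso Λ (P (kOdd j)) (S (kEven j))
  soc_classes : ∀ v : ZMod N, ∃ j, SocIso Λ (P v) (S (kEven j))

variable {R : Type} [CommRing R]
variable {Λ} [Algebra R Λ]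

/-- `D` is (a representative of) the module `Δ_j`: a shortest indecomposable module
with top `S_{k_{2(j-1)} + 1}` and socle `S_{k_{2j}}`. -/
def IsDelta (pres : CyclicNakayama R Λ) (j : ZMod pres.r) (D : ModuleCat.{0} Λ) : Prop :=
  Module.Finite Λ D ∧ Indec Λ D ∧
    TopIso Λ D (pres.S (pres.kEven (j - 1) + 1)) ∧ SocIso Λ D (pres.S (pres.kEven j)) ∧
    ∀ D' : ModuleCat.{0} Λ, Module.Finite Λ D' → Indec Λ D' →
      TopIso Λ D' (pres.S (pres.kEven (j - 1) + 1)) → SocIso Λ D' (pres.S (pres.kEven j)) →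
      ∀ n n' : ℕ, HasLength Λ D n → HasLength Λ D' n' → n ≤ n'

/-- `M` is a `Δ`-module: it admits a finite filtration whose successive subquotients
are isomorphic to modules among `Δ_1, …, Δ_r`. -/
def IsDeltaModule (pres : CyclicNakayama R Λ) (Δ : ZMod pres.r → ModuleCat.{0} Λ)
    (M : ModuleCat.{0} Λ) : Prop :=
  ∃ (n : ℕ) (F : Fin (n + 1) → Submodule Λ M), Monotone F ∧ F 0 = ⊥ ∧ F (Fin.last n) = ⊤ ∧
    ∀ i : Fin n, ∃ j : ZMod pres.r,
      Nonempty ((F i.succ ⧸ Submodule.comap (F i.succ).subtype (F i.castSucc)) ≃ₗ[Λ] Δ j)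

end PhiDim

namespace PhiDim

section helpers

open Function

/-! ### Dynamics of intervals -/

/-- On a finite set, a high enough iterate of a self-map lands in the periodic points. -/
theorem exists_iterate_periodic {S : Type*} [Finite S] (L : S → S) :
    ∃ d, ∀ s, L^[d] s ∈ periodicPts L := by
  have h1 : ∀ s, ∃ n, ∀ m, n ≤ m → L^[m] s ∈ periodicPts L := by
    intro s
    obtain ⟨i, j, hij, he⟩ := Finite.exists_ne_map_eq_of_infinite (fun n : ℕ => L^[n] s)
    wlog hlt : i < j generalizing i j
    · exact this j i hij.symm he.symm (by omega)
    refine ⟨i, fun m hm => ?_⟩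
    obtain ⟨k, rfl⟩ := Nat.exists_eq_add_of_le' hm
    rw [iterate_add_apply]
    refine mk_mem_periodicPts (n := j - i) (by omega) ?_
    apply IsPeriodicPt.apply_iterate
    change L^[j - i] (L^[i] s) = L^[i] s
    rw [← iterate_add_apply, Nat.sub_add_cancel hlt.le]
    exact he.symm
  choose n hn using h1
  cases nonempty_fintype S
  exact ⟨Finset.univ.sup n, fun s => hn s _ (Finset.le_sup (Finset.mem_univ s))⟩

theorem iterate_mem_periodicPts {S : Type*} {L : S → S} {s : S} (h : s ∈ periodicPts L) (n : ℕ) :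
    L^[n] s ∈ periodicPts L := by
  induction n with
  | zero => exact h
  | succ n ih => rw [iterate_succ_apply']; exact (bijOn_periodicPts L).mapsTo ih

section comb
variable {N : ℕ} (c : ZMod N → ℕ)

/-- Isomorphism classes of indecomposable nonprojective modules, encoded as pairs
(top, length), together with a base point `none` standing for projective modules
(in particular for the zero module). -/
abbrev State := Option {p : ZMod N × ℕ // 0 < p.2 ∧ p.2 < c p.1}

/-- The state of a uniserial module with top `S i` and length `l`; the out-of-range
lengths `l = 0` (zero module) and `l ≥ c i` (projective module) give the base point. -/
def pack (i : ZMod N) (l : ℕ) : State c :=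
  if h : 0 < l ∧ l < c i then some ⟨(i, l), h⟩ else none

/-- The syzygy on states: the kernel of `P i → M`, with `M` of length `l`, has top
`S (i + l)` and length `c i - l`. -/
def step : State c → State c
  | none => none
  | some v => pack c (v.1.1 + (v.1.2 : ZMod N)) (c v.1.1 - v.1.2)

/-- The map `f` on `ℤ` sending `x` to the right end of the interval of the projective
with top `x mod N`. -/
def push (x : ℤ) : ℤ := x + c (x : ZMod N)

/-- The state of the interval `[a, b)`: top `a mod N` and length `b - a`. -/
def pair (a b : ℤ) : State c := pack c (a : ZMod N) (b - a).toNat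

/-- The reduction of `push` modulo `N`. -/
def pushMod (i : ZMod N) : ZMod N := i + (c i : ZMod N)

/-- The integers whose residue is periodic under `pushMod`. On this set `push` is a
strictly increasing bijection. -/
def Ev : Set ℤ := {x | (x : ZMod N) ∈ periodicPts (pushMod c)}

theorem push_cast (x : ℤ) : ((push c x : ℤ) : ZMod N) = pushMod c x := by
  simp [push, pushMod]

theorem push_add (x q : ℤ) : push c (x + q * N) = push c x + q * N := by
  simp [push]; ring

theorem iterate_push_cast (n : ℕ) (x : ℤ) :
    (((push c)^[n] x : ℤ) : ZMod N) = (pushMod c)^[n] x := by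
  induction n with
  | zero => rfl
  | succ n ih => rw [iterate_succ_apply', iterate_succ_apply', push_cast, ih]

theorem eq_add_of_cast {x y : ℤ} (h : (x : ZMod N) = y) : ∃ q : ℤ, x = y + q * N := by
  obtain ⟨q, hq⟩ := (ZMod.intCast_eq_intCast_iff_dvd_sub y x N).1 h.symm
  exact ⟨q, by linarith [hq]⟩

theorem add_mem_Ev {x : ℤ} (h : x ∈ Ev c) (q : ℤ) : x + q * N ∈ Ev c := by
  simpa [Ev] using h

theorem push_mem_Ev {x : ℤ} (h : x ∈ Ev c) : push c x ∈ Ev c := by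
  change ((push c x : ℤ) : ZMod N) ∈ periodicPts (pushMod c)
  rw [push_cast]
  exact (bijOn_periodicPts (pushMod c)).mapsTo h

theorem push_inj_Ev [NeZero N] {x y : ℤ} (hx : x ∈ Ev c) (hy : y ∈ Ev c) (h : push c x = push c y) :
    x = y := by
  have h1 : (x : ZMod N) = y := (bijOn_periodicPts (pushMod c)).injOn hx hy
    (by rw [← push_cast, ← push_cast, h])
  obtain ⟨q, rfl⟩ := eq_add_of_cast h1
  rw [push_add] at h
  linarith

theorem exists_push_eq {x : ℤ} (hx : x ∈ Ev c) : ∃ y ∈ Ev c, push c y = x := by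
  obtain ⟨i, hi, hix⟩ := (bijOn_periodicPts (pushMod c)).surjOn hx
  obtain ⟨y, rfl⟩ := ZMod.intCast_surjective i
  rw [← push_cast] at hix
  obtain ⟨q, hq⟩ := eq_add_of_cast hix
  refine ⟨y + (-q) * N, add_mem_Ev c hi _, ?_⟩
  rw [push_add, hq]; ring

theorem exists_iterate_push_eq (n : ℕ) {x : ℤ} (hx : x ∈ Ev c) :
    ∃ y ∈ Ev c, (push c)^[n] y = x := by
  induction n generalizing x with
  | zero => exact ⟨x, hx, rfl⟩
  | succ n ih =>
    obtain ⟨y, hy, rfl⟩ := exists_push_eq c hx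
    obtain ⟨z, hz, rfl⟩ := ih hy
    exact ⟨z, hz, iterate_succ_apply' _ _ _⟩

variable {c}
variable (hpos : ∀ i, 1 ≤ c i) (hmono : ∀ i, c i ≤ c (i + 1) + 1)

include hpos in
theorem lt_push (x : ℤ) : x < push c x := by
  have := hpos (x : ZMod N); unfold push; omega

include hmono in
theorem push_monotone : Monotone (push c) := by
  refine monotone_int_of_le_succ fun n => ?_
  have := hmono (n : ZMod N)
  unfold push
  push_cast
  have h2 : (c (n : ZMod N) : ℤ) ≤ c ((n : ZMod N) + 1) + 1 := by exact_mod_cast this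
  linarith

theorem pair_eq_none {a b : ℤ} (hab : a ≤ b) (hb : b ≤ push c a) :
    pair c a b = none ↔ a = b ∨ b = push c a := by
  unfold pair pack push at *
  split_ifs with h
  · simp; omega
  · simp; omega

/-- `Ω[a, b) = [b, f a)`. -/
theorem step_pair {a b : ℤ} (hab : a ≤ b) (hb : b ≤ push c a) (hm : push c a ≤ push c b) :
    step c (pair c a b) = pair c b (push c a) := by
  by_cases h : a = b ∨ b = push c a
  · rw [(pair_eq_none hab hb).2 h, eq_comm]
    change _ = none
    rw [pair_eq_none hb hm]
    rcases h with rfl | h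
    · exact .inr rfl
    · exact .inl h
  · push Not at h
    have h1 : 0 < (b - a).toNat ∧ (b - a).toNat < c (a : ZMod N) := by
      unfold push at *; omega
    have h2 : pair c a b = some ⟨((a : ZMod N), (b - a).toNat), h1⟩ := dif_pos h1
    rw [h2]
    simp only [step, pair]
    congr 1
    · have : ((b - a).toNat : ZMod N) = ((((b - a).toNat : ℕ) : ℤ) : ZMod N) := by push_cast; rfl
      rw [this, Int.toNat_of_nonneg (by omega)]; push_cast; ring
    · unfold push at *; omega

/-- Every state is an interval `[a, b)` with `a ≤ b ≤ f a`. -/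
theorem exists_pair [NeZero N] (s : State c) : ∃ a b : ℤ, a ≤ b ∧ b ≤ push c a ∧ pair c a b = s := by
  rcases s with _ | ⟨⟨i, l⟩, h0, h1⟩
  · exact ⟨0, 0, le_rfl, by unfold push; omega, by simp [pair, pack]⟩
  · obtain ⟨a, rfl⟩ := ZMod.intCast_surjective i
    refine ⟨a, a + l, by omega, by unfold push; dsimp at *; omega, ?_⟩
    have : (a + l - a).toNat = l := by omega
    unfold pair
    rw [this]
    exact dif_pos ⟨h0, h1⟩

/-- A nonprojective interval is determined by its state up to translation by `N`. -/
theorem pair_inj {a b a' b' : ℤ} (hab : a ≤ b)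
    (hab' : a' ≤ b') (h : pair c a b = pair c a' b') (hn : pair c a b ≠ none) :
    ∃ q : ℤ, a' = a + q * N ∧ b' = b + q * N := by
  have h1 : 0 < (b - a).toNat ∧ (b - a).toNat < c (a : ZMod N) := by
    by_contra h1; exact hn (dif_neg h1)
  have h1' : 0 < (b' - a').toNat ∧ (b' - a').toNat < c (a' : ZMod N) := by
    by_contra h1; rw [h] at hn; exact hn (dif_neg h1)
  have h2 : pair c a b = some ⟨((a : ZMod N), (b - a).toNat), h1⟩ := dif_pos h1
  have h2' : pair c a' b' = some ⟨((a' : ZMod N), (b' - a').toNat), h1'⟩ := dif_pos h1'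
  rw [h2, h2'] at h
  simp only [Option.some.injEq, Subtype.mk.injEq, Prod.mk.injEq] at h
  obtain ⟨q, hq⟩ := eq_add_of_cast h.1.symm
  exact ⟨q, hq, by omega⟩

include hmono in
/-- `Ω²ⁿ[a, b) = [fⁿ a, fⁿ b)`. -/
theorem iterate_two_step_pair (n : ℕ) {a b : ℤ} (hab : a ≤ b) (hb : b ≤ push c a) :
    (step c)^[2 * n] (pair c a b) = pair c ((push c)^[n] a) ((push c)^[n] b) ∧
      (push c)^[n] a ≤ (push c)^[n] b ∧ (push c)^[n] b ≤ push c ((push c)^[n] a) := by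
  have hm := push_monotone hmono
  induction n with
  | zero => exact ⟨rfl, hab, hb⟩
  | succ n ih =>
    obtain ⟨h1, h2, h3⟩ := ih
    rw [show 2 * (n + 1) = 2 * n + 1 + 1 by ring, iterate_succ_apply', iterate_succ_apply', h1,
      iterate_succ_apply', iterate_succ_apply', step_pair h2 h3 (hm h2),
      step_pair h3 (hm h2) (hm h3)]
    exact ⟨rfl, hm h2, hm h3⟩

theorem mem_Ev_iterate [NeZero N] : ∃ n, ∀ x, (push c)^[n] x ∈ Ev c := by
  obtain ⟨n, hn⟩ := exists_iterate_periodic (pushMod c)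
  refine ⟨n, fun x => ?_⟩
  change ((((push c)^[n] x : ℤ)) : ZMod N) ∈ periodicPts (pushMod c)
  rw [iterate_push_cast]; exact hn _

instance [NeZero N] : Finite {p : ZMod N × ℕ // 0 < p.2 ∧ p.2 < c p.1} := by
  obtain ⟨B, hB⟩ := (Set.finite_range c).bddAbove
  refine Finite.of_injective (β := ZMod N × Fin B)
    (fun p => (p.1.1, ⟨p.1.2, p.2.2.trans_le (hB ⟨_, rfl⟩)⟩)) ?_
  rintro ⟨⟨a, b⟩, h⟩ ⟨⟨a', b'⟩, h'⟩ he
  simpa using he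

include hmono in
/-- An interval with both end points in `Ev c` is periodic: it has preimages of every order
under the syzygy, since `[b, b') = Ω[a, b)` for the preimage `a` of `b'` in `Ev c`. -/
theorem pair_periodic [NeZero N] {a b : ℤ} (hab : a ≤ b) (hb : b ≤ push c a)
    (ha : a ∈ Ev c) (hb' : b ∈ Ev c) : pair c a b ∈ periodicPts (step c) := by
  have hm := push_monotone hmono
  obtain ⟨d, hd⟩ := exists_iterate_periodic (step c)
  suffices h : ∀ n, ∀ a b, a ≤ b → b ≤ push c a → a ∈ Ev c → b ∈ Ev c →
      ∃ s, (step c)^[n] s = pair c a b by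
    obtain ⟨s, hs⟩ := h d a b hab hb ha hb'
    exact hs ▸ hd s
  intro n
  induction n with
  | zero => exact fun a b _ _ _ _ => ⟨_, rfl⟩
  | succ n ih =>
    intro b b' hbb hb' hbE hbE'
    obtain ⟨a, haE, rfl⟩ := exists_push_eq c hbE'
    have hab : a ≤ b := by
      by_contra! h
      exact h.ne' (push_inj_Ev c haE hbE (le_antisymm hb' (hm h.le)))
    obtain ⟨s, hs⟩ := ih a b hab hbb haE hbE
    exact ⟨s, by rw [iterate_succ_apply', hs, step_pair hab hbb hb']⟩

include hmono in
/-- Conversely to `pair_periodic`, a nonprojective periodic interval has both end points in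
`Ev c`. -/
theorem mem_Ev_of_periodic {a b : ℤ} (hab : a ≤ b) (hb : b ≤ push c a)
    (hp : pair c a b ∈ periodicPts (step c)) (hn : pair c a b ≠ none) : a ∈ Ev c ∧ b ∈ Ev c := by
  obtain ⟨k, hk, hp⟩ := hp
  have h2 : (step c)^[2 * k] (pair c a b) = pair c a b := (hp.const_mul 2)
  obtain ⟨h3, h4, h5⟩ := iterate_two_step_pair hmono k hab hb
  rw [h3] at h2
  obtain ⟨q, hqa, hqb⟩ := pair_inj hab h4 h2.symm hn
  constructor
  · refine ⟨k, hk, ?_⟩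
    change _ = _
    rw [← iterate_push_cast, hqa]; simp
  · refine ⟨k, hk, ?_⟩
    change _ = _
    rw [← iterate_push_cast, hqb]; simp

/-- Each element of `Ev c` has an immediate predecessor in `Ev c`. -/
theorem exists_pred {e : ℤ} [NeZero N] (he : e ∈ Ev c) :
    ∃ p ∈ Ev c, p < e ∧ ∀ x ∈ Ev c, x < e → x ≤ p := by
  have hN : (0 : ℤ) < N := by have := NeZero.pos N; omega
  obtain ⟨p, ⟨h1, h2⟩, h3⟩ := Int.exists_greatest_of_bdd (P := fun x => x ∈ Ev c ∧ x < e)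
    ⟨e, fun z hz => hz.2.le⟩ ⟨e + (-1) * N, add_mem_Ev c he _, by linarith⟩
  exact ⟨p, h1, h2, fun x hx hxe => h3 x ⟨hx, hxe⟩⟩

include hmono in
theorem push_lt_push [NeZero N] {x y : ℤ} (hx : x ∈ Ev c) (hy : y ∈ Ev c) (h : x < y) :
    push c x < push c y :=
  lt_of_le_of_ne (push_monotone hmono h.le) fun h' => h.ne (push_inj_Ev c hx hy h')

include hpos hmono in
/-- If `e` and `f e` are consecutive elements of `Ev c` for one `e`, then `x` and `f x` are
consecutive for every `x ∈ Ev c`, so no interval with end points in `Ev c` is nonprojective. -/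
theorem all_consecutive [NeZero N] {e : ℤ} (he : e ∈ Ev c)
    (hc : ∀ x ∈ Ev c, x < push c e → x ≤ e) {x y : ℤ} (hx : x ∈ Ev c) (hy : y ∈ Ev c)
    (hxy : x ≤ y) (hyx : y ≤ push c x) : x = y ∨ y = push c x := by
  have hN : (1 : ℤ) ≤ N := by have := NeZero.pos N; omega
  have hcn : ∀ n : ℕ, (push c)^[n] e ∈ Ev c ∧ e + n ≤ (push c)^[n] e ∧
      ∀ x ∈ Ev c, x < push c ((push c)^[n] e) → x ≤ (push c)^[n] e := by
    intro n
    induction n with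
    | zero => exact ⟨he, by simp, hc⟩
    | succ n ih =>
      rw [iterate_succ_apply']
      refine ⟨push_mem_Ev c ih.1, ?_, fun x hx hxl => ?_⟩
      · have := lt_push hpos ((push c)^[n] e)
        push_cast; linarith [ih.2.1]
      · obtain ⟨y, hy, rfl⟩ := exists_push_eq c hx
        refine push_monotone hmono (ih.2.2 y hy ?_)
        by_contra! h
        exact absurd (push_monotone hmono h) (not_le.2 hxl)
  -- translate `x` and `y` by a multiple of `N` to the right of `e`
  wlog hxe : e ≤ x generalizing x y
  · have hk : e ≤ x + |e - x| * N := by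
      nlinarith [le_abs_self (e - x), abs_nonneg (e - x)]
    have := this (x := x + |e - x| * N) (y := y + |e - x| * N) (add_mem_Ev c hx _)
      (add_mem_Ev c hy _) (by linarith) (by rw [push_add]; linarith) hk
    rw [push_add] at this
    rcases this with h | h
    · left; linarith
    · right; linarith
  have hex : ∃ n : ℕ, x < (push c)^[n] e := ⟨(x - e).toNat + 1, by
    have := (hcn ((x - e).toNat + 1)).2.1
    push_cast at this
    have := Int.self_le_toNat (x - e)
    linarith⟩
  obtain ⟨n, hn, hmin⟩ : ∃ n : ℕ, x < (push c)^[n + 1] e ∧ (push c)^[n] e ≤ x := by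
    have h1 := Nat.find_spec hex
    have h0 : Nat.find hex ≠ 0 := fun h0 => by
      rw [h0] at h1; exact absurd h1 (not_lt.2 hxe)
    obtain ⟨m, hm⟩ := Nat.exists_eq_succ_of_ne_zero h0
    refine ⟨m, by simpa [hm] using h1, not_lt.1 (Nat.find_min hex (by omega))⟩
  rw [iterate_succ_apply'] at hn
  have hxn : x = (push c)^[n] e := le_antisymm ((hcn n).2.2 x hx hn) hmin
  rcases hyx.lt_or_eq with h | h
  · left
    exact le_antisymm hxy (by rw [hxn]; exact (hcn n).2.2 y hy (hxn ▸ h))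
  · exact .inr h

include hpos hmono in
/-- The contradiction behind evenness, with `R` playing the role of the range of `f^m`.
By `hH`, the syzygy of an interval with end points in `R` has both end points in `Ev c` as soon
as it is nonprojective; then no interval `[a, b)` with end points in `R`, not both in `Ev c`,
satisfies `f a = f b` or has a syzygy with both end points in `Ev c`. -/
theorem key [NeZero N] (R : Set ℤ) (hER : Ev c ⊆ R)
    (hH : ∀ a ∈ R, ∀ b ∈ R, a < b → b < push c a → push c a < push c b →
      b ∈ Ev c ∧ push c a ∈ Ev c)
    (hinf : ¬ ∃ n, ∀ s, (step c)^[n] s = none)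
    {a b : ℤ} (ha : a ∈ R) (hb : b ∈ R)
    (hE : ¬ (a ∈ Ev c ∧ b ∈ Ev c))
    (hor : push c a = push c b ∨ (b ∈ Ev c ∧ push c a ∈ Ev c)) : False := by
  have hm := push_monotone hmono
  have hlt := lt_push hpos (c := c)
  by_cases hfa : push c a ∈ Ev c
  -- Here `f` merges some `u ∈ R` outside `Ev c` with some `e ∈ Ev c`. For the predecessor `p`
  -- of `e` this forces `f p = e`, hence finite global dimension.
  · obtain ⟨e, he, hfe⟩ := exists_push_eq c hfa
    obtain ⟨p, hp, hpe, hpmax⟩ := exists_pred he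
    have hplt : push c p < push c e := push_lt_push hmono hp he hpe
    obtain ⟨u, huE, huR, hu⟩ : ∃ u, u ∉ Ev c ∧ u ∈ R ∧ push c u = push c e := by
      by_cases haE : a ∈ Ev c
      · refine ⟨b, fun h => hE ⟨haE, h⟩, hb, ?_⟩
        rcases hor with h | h
        · rw [hfe, h]
        · exact absurd ⟨haE, h.1⟩ hE
      · exact ⟨a, haE, ha, hfe.symm⟩
    have hpu : p < u := by
      by_contra! h
      exact absurd (hm h) (not_le.2 (hu ▸ hplt))
    have hpu2 : push c p ≤ u := by
      by_contra! h
      exact huE (hH p (hER hp) u huR hpu h (hu ▸ hplt)).1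
    have h1 : push c p ≤ e := by
      by_contra! h
      have := push_lt_push hmono he (push_mem_Ev c hp) h
      have := hm hpu2
      omega
    have h2 : push c p = e := by
      refine le_antisymm h1 ?_
      by_contra! h
      have := hpmax _ (push_mem_Ev c hp) h
      have := hlt p
      omega
    refine hinf ?_
    obtain ⟨n, hn⟩ := mem_Ev_iterate (c := c)
    refine ⟨2 * n, fun s => ?_⟩
    obtain ⟨x, y, hxy, hyx, rfl⟩ := exists_pair s
    obtain ⟨h3, h4, h5⟩ := iterate_two_step_pair hmono n hxy hyx
    rw [h3, pair_eq_none h4 h5]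
    exact all_consecutive hpos hmono hp (fun x hx hxl => hpmax x hx (h2 ▸ hxl)) (hn x) (hn y) h4 h5
  -- Here the least `e ∈ Ev c` with `f a < f e` lies above `f a`, while its predecessor `p`
  -- satisfies `f p ≤ f a < e`; so `f p ≤ p`, which is absurd.
  · have hN : (1 : ℤ) ≤ N := by have := NeZero.pos N; omega
    obtain ⟨n, hn⟩ := mem_Ev_iterate (c := c)
    obtain ⟨e, ⟨he, hfe⟩, hmin⟩ := Int.exists_least_of_bdd
      (P := fun x => x ∈ Ev c ∧ push c a < push c x)
      ⟨a, fun z hz => by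
        by_contra! h
        exact absurd (hm h.le) (not_le.2 hz.2)⟩
      (by
        refine ⟨(push c)^[n] 0 + (|push c a - (push c)^[n] 0|) * N, add_mem_Ev c (hn 0) _, ?_⟩
        refine lt_of_le_of_lt ?_ (hlt _)
        nlinarith [le_abs_self (push c a - (push c)^[n] 0),
          abs_nonneg (push c a - (push c)^[n] 0)])
    have hae : a < e := by
      by_contra! h
      exact absurd (hm h) (not_le.2 hfe)
    have h1 : push c a ≤ e := by
      by_contra! h
      exact hfa (hH a ha e (hER he) hae h hfe).2
    have h2 : push c a < e := lt_of_le_of_ne h1 fun h => hfa (h ▸ he)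
    obtain ⟨p, hp, hpe, hpmax⟩ := exists_pred he
    have h3 : push c p ≤ push c a := by
      by_contra! h
      have := hmin p ⟨hp, h⟩
      omega
    have := hpmax _ (push_mem_Ev c hp) (by omega)
    have := hlt p
    omega

include hpos hmono in
/-- The length of the transient of the syzygy on states is even, unless all states eventually
become projective. -/
theorem even_transient [NeZero N] (hinf : ¬ ∃ n, ∀ s, (step c)^[n] s = none) :
    ∃ m, (∀ s, (step c)^[2 * m] s ∈ periodicPts (step c)) ∧
      ∀ d, d < 2 * m → ∃ s, (step c)^[d] s ∉ periodicPts (step c) := by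
  classical
  have hex := exists_iterate_periodic (step c)
  have hspec := Nat.find_spec hex
  have hmin := fun d => Nat.find_min hex (m := d)
  rcases Nat.even_or_odd' (Nat.find hex) with ⟨m, hm | hm⟩
  · rw [hm] at hspec hmin
    exact ⟨m, hspec, fun d hd => by simpa using hmin d hd⟩
  · exfalso
    rw [hm] at hspec hmin
    have hM := push_monotone hmono
    have hMm : Monotone (push c)^[m] := hM.iterate m
    obtain ⟨s, hs⟩ := not_forall.1 (hmin (2 * m) (by omega))
    have hs' := hspec s
    obtain ⟨i, j, hij, hji, rfl⟩ := exists_pair s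
    have hodd : ∀ x y, x ≤ y → y ≤ push c x → (step c)^[2 * m + 1] (pair c x y) =
        pair c ((push c)^[m] y) (push c ((push c)^[m] x)) := by
      intro x y hxy hyx
      obtain ⟨h3, h4, h5⟩ := iterate_two_step_pair hmono m hxy hyx
      rw [iterate_succ_apply', h3, step_pair h4 h5 (hM h4)]
    rw [hodd i j hij hji] at hs'
    obtain ⟨h3, h4, h5⟩ := iterate_two_step_pair hmono m hij hji
    rw [h3] at hs
    set a := (push c)^[m] i with ha
    set b := (push c)^[m] j with hb
    have hnone : pair c a b ≠ none := fun h => hs (h ▸ ⟨1, one_pos, rfl⟩)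
    rw [Ne, pair_eq_none h4 h5] at hnone
    push Not at hnone
    refine key hpos hmono (Set.range (push c)^[m]) ?_ ?_ hinf ⟨i, ha.symm⟩ ⟨j, hb.symm⟩
      (fun h => hs (pair_periodic hmono h4 h5 h.1 h.2)) ?_
    · intro x hx
      obtain ⟨y, -, hy⟩ := exists_iterate_push_eq c m hx
      exact ⟨y, hy⟩
    · rintro _ ⟨x, rfl⟩ _ ⟨y, rfl⟩ h1 h2 h6
      have hxy : x ≤ y := by
        by_contra! h
        exact absurd (hMm h.le) (not_le.2 h1)
      have hyx : y ≤ push c x := by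
        by_contra! h
        have := hMm h.le
        rw [← iterate_succ_apply, iterate_succ_apply'] at this
        omega
      have hp := hspec (pair c x y)
      rw [hodd x y hxy hyx] at hp
      refine mem_Ev_of_periodic hmono h2.le h6.le hp ?_
      rw [Ne, pair_eq_none h2.le h6.le]
      push Not
      exact ⟨h2.ne, h6.ne⟩
    · by_cases hn : pair c b (push c a) = none
      · left
        rw [pair_eq_none h5 (hM h4)] at hn
        exact hn.resolve_left hnone.2
      · exact .inr (mem_Ev_of_periodic hmono h5 (hM h4) hs' hn)

end comb

variable {Λ : Type} [Ring Λ]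

/-! ### Uniqueness and additivity of syzygies -/

section projcover

/-- The submodule `p.prod q` of `A × B` is the product of the modules `p` and `q`. -/
def submoduleProdEquiv {A B : Type} [AddCommGroup A] [AddCommGroup B] [Module Λ A] [Module Λ B]
    (p : Submodule Λ A) (q : Submodule Λ B) : p.prod q ≃ₗ[Λ] p × q where
  toFun x := (⟨x.1.1, x.2.1⟩, ⟨x.1.2, x.2.2⟩)
  invFun x := ⟨(x.1.1, x.2.1), x.1.2, x.2.2⟩
  map_add' _ _ := rfl
  map_smul' _ _ := rfl

/-- Kernels of projective covers of isomorphic modules are isomorphic. -/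
theorem isProjCover_ker_equiv {P P' M M' : ModuleCat.{0} Λ} {f : P →ₗ[Λ] M} {f' : P' →ₗ[Λ] M'}
    (hf : IsProjCover Λ f) (hf' : IsProjCover Λ f') (e : M ≃ₗ[Λ] M') :
    Nonempty (LinearMap.ker f ≃ₗ[Λ] LinearMap.ker f') := by
  obtain ⟨hP, hs, hk⟩ := hf
  obtain ⟨hP', hs', hk'⟩ := hf'
  obtain ⟨h, hh⟩ := Module.projective_lifting_property f' (e.toLinearMap ∘ₗ f) hs'
  have hh' : ∀ x, f' (h x) = e (f x) := fun x => LinearMap.congr_fun hh x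
  have hsurj : Function.Surjective h := by
    rw [← LinearMap.range_eq_top]
    refine hk' _ (eq_top_iff.2 fun y _ => ?_)
    obtain ⟨x, hx⟩ := hs (e.symm (f' y))
    rw [← add_sub_cancel (h x) y]
    refine Submodule.add_mem_sup ⟨x, rfl⟩ ?_
    simp [hh', hx]
  obtain ⟨s, hsh⟩ := Module.projective_lifting_property h LinearMap.id hsurj
  have hsh' : ∀ x, h (s x) = x := fun x => LinearMap.congr_fun hsh x
  have hs2 : LinearMap.range s = ⊤ := by
    refine hk _ (eq_top_iff.2 fun x _ => ?_)
    rw [← add_sub_cancel (s (h x)) x]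
    refine Submodule.add_mem_sup ⟨h x, rfl⟩ ?_
    rw [LinearMap.mem_ker]
    apply e.injective
    rw [← hh', map_sub, hsh', sub_self, map_zero, map_zero]
  have hinj : Function.Injective h := by
    intro x y hxy
    obtain ⟨x', rfl⟩ := LinearMap.range_eq_top.1 hs2 x
    obtain ⟨y', rfl⟩ := LinearMap.range_eq_top.1 hs2 y
    rw [hsh', hsh'] at hxy
    rw [hxy]
  refine ⟨(LinearEquiv.ofBijective h ⟨hinj, hsurj⟩).ofSubmodules _ _ ?_⟩
  ext y
  simp only [Submodule.mem_map, LinearMap.mem_ker]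
  constructor
  · rintro ⟨x, hx, rfl⟩
    change f' (h x) = 0
    rw [hh', hx, map_zero]
  · intro hy
    obtain ⟨x, rfl⟩ := hsurj y
    refine ⟨x, ?_, rfl⟩
    apply e.injective
    rw [← hh', hy, map_zero]

theorem IsSyzygy.unique {Y Y' M M' : ModuleCat.{0} Λ} (h : IsSyzygy Λ Y M)
    (h' : IsSyzygy Λ Y' M') (e : M ≃ₗ[Λ] M') : Nonempty (Y ≃ₗ[Λ] Y') := by
  obtain ⟨P, f, hf, ⟨a⟩⟩ := h
  obtain ⟨P', f', hf', ⟨a'⟩⟩ := h'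
  obtain ⟨b⟩ := isProjCover_ker_equiv hf hf' e
  exact ⟨a.trans (b.trans a'.symm)⟩

theorem isProjCover_id (M : ModuleCat.{0} Λ) [Module.Projective Λ M] :
    IsProjCover Λ (LinearMap.id : M →ₗ[Λ] M) :=
  ⟨‹_›, Function.surjective_id, fun N hN => by simpa using hN⟩

theorem isSyzygy_of_projective {M : ModuleCat.{0} Λ} (hM : Module.Projective Λ M) :
    IsSyzygy Λ (ModuleCat.of Λ (LinearMap.ker (LinearMap.id : M →ₗ[Λ] M))) M :=
  ⟨M, LinearMap.id, isProjCover_id M, ⟨LinearEquiv.refl _ _⟩⟩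

theorem subsingleton_of_isSyzygy {Y M : ModuleCat.{0} Λ} (hM : Module.Projective Λ M)
    (h : IsSyzygy Λ Y M) : Subsingleton Y := by
  obtain ⟨e⟩ := h.unique (isSyzygy_of_projective hM) (LinearEquiv.refl _ _)
  have : Subsingleton (LinearMap.ker (LinearMap.id : M →ₗ[Λ] M)) := by
    rw [LinearMap.ker_id]; infer_instance
  exact e.toEquiv.subsingleton

theorem IsSyzygy.prod {Y Y' M M' : ModuleCat.{0} Λ} (h : IsSyzygy Λ Y M)
    (h' : IsSyzygy Λ Y' M') :
    IsSyzygy Λ (ModuleCat.of Λ (Y × Y')) (ModuleCat.of Λ (M × M')) := by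
  obtain ⟨P, f, ⟨hP, hs, hk⟩, ⟨a⟩⟩ := h
  obtain ⟨P', f', ⟨hP', hs', hk'⟩, ⟨a'⟩⟩ := h'
  refine ⟨ModuleCat.of Λ (P × P'), f.prodMap f', ⟨?_, ?_, ?_⟩, ⟨?_⟩⟩
  · change Module.Projective Λ (P × P')
    infer_instance
  · exact Function.Surjective.prodMap hs hs'
  · intro N hN
    have key : ∀ p : P × P', ∃ n ∈ N, f (p.1 - n.1) = 0 ∧ f' (p.2 - n.2) = 0 := by
      intro p
      have : p ∈ N ⊔ LinearMap.ker (f.prodMap f') := hN ▸ Submodule.mem_top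
      obtain ⟨n, hn, k, hk, rfl⟩ := Submodule.mem_sup.1 this
      refine ⟨n, hn, ?_⟩
      simpa [Prod.ext_iff] using hk
    -- `N` together with `0 × ker f'` contains `P × 0`, since `ker f` is superfluous in `P`
    have h1 : N ⊔ Submodule.prod ⊥ (LinearMap.ker f') = ⊤ := by
      set N1 := N ⊔ Submodule.prod ⊥ (LinearMap.ker f') with hN1
      have hc : N1.comap (LinearMap.inl Λ P P') = ⊤ := by
        refine hk _ (eq_top_iff.2 fun p _ => ?_)
        obtain ⟨n, hn, h1, h2⟩ := key (p, 0)
        rw [← add_sub_cancel n.1 p]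
        refine Submodule.add_mem_sup ?_ h1
        change ((n.1, 0) : P × P') ∈ N1
        have : ((n.1, 0) : P × P') = n + (0, 0 - n.2) := by ext <;> simp
        rw [this]
        exact Submodule.add_mem_sup hn ⟨rfl, h2⟩
      refine eq_top_iff.2 fun p _ => ?_
      obtain ⟨n, hn, h1, h2⟩ := key p
      have h3 : ((p.1 - n.1, 0) : P × P') ∈ N1 := by
        have : p.1 - n.1 ∈ N1.comap (LinearMap.inl Λ P P') := hc ▸ Submodule.mem_top
        exact this
      have h4 : n + (0, p.2 - n.2) ∈ N1 := Submodule.add_mem_sup hn ⟨rfl, h2⟩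
      have := N1.add_mem h3 h4
      convert this using 1
      ext <;> simp
    have hc : N.comap (LinearMap.inr Λ P P') = ⊤ := by
      refine hk' _ (eq_top_iff.2 fun p _ => ?_)
      have : ((0, p) : P × P') ∈ N ⊔ Submodule.prod ⊥ (LinearMap.ker f') :=
        h1 ▸ Submodule.mem_top
      obtain ⟨n, hn, k, hk, hnk⟩ := Submodule.mem_sup.1 this
      have hk1 : k.1 = 0 := hk.1
      have h2 : n.2 + k.2 = p := congrArg Prod.snd hnk
      have h3 : n.1 = 0 := by simpa [hk1] using congrArg Prod.fst hnk
      rw [← h2]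
      refine Submodule.add_mem_sup ?_ hk.2
      change ((0, n.2) : P × P') ∈ N
      rw [← h3]; exact hn
    have h2 : Submodule.prod ⊥ (LinearMap.ker f') ≤ N := by
      rintro ⟨x, y⟩ ⟨hx, -⟩
      obtain rfl : x = 0 := hx
      have : y ∈ N.comap (LinearMap.inr Λ P P') := hc ▸ Submodule.mem_top
      exact this
    rwa [sup_eq_left.2 h2] at h1
  · rw [LinearMap.ker_prodMap]
    exact (a.prodCongr a').trans (submoduleProdEquiv _ _).symm

theorem isNthSyzygy_iso {n : ℕ} {Y M M' : ModuleCat.{0} Λ} (h : IsNthSyzygy Λ n Y M)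
    (e : M ≃ₗ[Λ] M') : IsNthSyzygy Λ n Y M' := by
  cases n with
  | zero => exact ⟨h.some.trans e⟩
  | succ n =>
    obtain ⟨Z, ⟨P, f, ⟨hP, hs, hk⟩, ⟨a⟩⟩, hZ⟩ := h
    refine ⟨Z, ⟨P, e.toLinearMap ∘ₗ f, ⟨hP, e.surjective.comp hs, ?_⟩, ⟨?_⟩⟩, hZ⟩
    · rw [LinearEquiv.ker_comp]; exact hk
    · rw [LinearEquiv.ker_comp]; exact a

theorem IsNthSyzygy.prod {n : ℕ} {Y Y' M M' : ModuleCat.{0} Λ} (h : IsNthSyzygy Λ n Y M)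
    (h' : IsNthSyzygy Λ n Y' M') :
    IsNthSyzygy Λ n (ModuleCat.of Λ (Y × Y')) (ModuleCat.of Λ (M × M')) := by
  induction n generalizing M M' with
  | zero => exact ⟨h.some.prodCongr h'.some⟩
  | succ n ih =>
    obtain ⟨Z, hZ, h⟩ := h
    obtain ⟨Z', hZ', h'⟩ := h'
    exact ⟨_, hZ.prod hZ', ih h h'⟩

end projcover

/-! ### Uniserial modules and the modules of a cyclic Nakayama algebra -/

section uniserial

theorem IsUniserial.of_injective {M M' : ModuleCat.{0} Λ} (h : IsUniserial Λ M) (f : M' →ₗ[Λ] M)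
    (hf : Function.Injective f) : IsUniserial Λ M' := fun A B => by
  rcases h (A.map f) (B.map f) with h | h
  · exact .inl ((Submodule.map_le_map_iff_of_injective hf _ _).1 h)
  · exact .inr ((Submodule.map_le_map_iff_of_injective hf _ _).1 h)

theorem IsUniserial.of_surjective {M M' : ModuleCat.{0} Λ} (h : IsUniserial Λ M) (f : M →ₗ[Λ] M')
    (hf : Function.Surjective f) : IsUniserial Λ M' := fun A B => by
  rcases h (A.comap f) (B.comap f) with h | h
  · exact .inl ((Submodule.comap_le_comap_iff_of_surjective hf).1 h)
  · exact .inr ((Submodule.comap_le_comap_iff_of_surjective hf).1 h)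

theorem IsUniserial.indec {M : ModuleCat.{0} Λ} (h : IsUniserial Λ M) (hM : Nontrivial M) :
    Indec Λ M := by
  refine ⟨hM, fun A B hAB => ?_⟩
  rcases h A B with h | h
  · exact .inl (eq_bot_iff.2 (hAB.disjoint le_rfl h))
  · exact .inr (eq_bot_iff.2 (hAB.disjoint h le_rfl))

/-- `radical` is a supremum of proper submodules; for a nonzero finitely generated uniserial
module it is the unique maximal submodule. -/
theorem IsUniserial.isCoatom_radical {M : ModuleCat.{0} Λ} (h : IsUniserial Λ M)
    (hM : Nontrivial M) (hfg : Module.Finite Λ M) : IsCoatom (radical Λ M) := by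
  obtain ⟨K, hK, -⟩ := (eq_top_or_exists_le_coatom (⊥ : Submodule Λ M)).resolve_left bot_ne_top
  have : radical Λ M = K := by
    refine le_antisymm (sSup_le fun A hA => ?_) (le_sSup hK.1)
    rcases h A K with h | h
    · exact h
    · exact (hK.le_iff.1 h).elim (fun h => absurd h hA) (fun h => h.le)
  rwa [this]

theorem le_radical {M : Type} [AddCommGroup M] [Module Λ M] {A : Submodule Λ M} (hA : A ≠ ⊤) :
    A ≤ radical Λ M := le_sSup hA

theorem map_radical {M M' : Type} [AddCommGroup M] [Module Λ M] [AddCommGroup M'] [Module Λ M']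
    (e : M ≃ₗ[Λ] M') : (radical Λ M).map e.toLinearMap = radical Λ M' := by
  have h : ∀ {M M' : Type} [AddCommGroup M] [Module Λ M] [AddCommGroup M'] [Module Λ M']
      (e : M ≃ₗ[Λ] M'), (radical Λ M).map e.toLinearMap ≤ radical Λ M' := by
    intro M M' _ _ _ _ e
    rw [Submodule.map_le_iff_le_comap]
    refine sSup_le fun A hA => ?_
    rw [← Submodule.map_le_iff_le_comap]
    refine le_radical fun h => hA ?_
    have h1 : A.map e.toLinearMap = (⊤ : Submodule Λ M).map e.toLinearMap := by
      rw [h, Submodule.map_top, LinearEquiv.range]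
    exact Submodule.map_injective_of_injective e.injective h1
  refine le_antisymm (h e) ?_
  intro y hy
  refine ⟨e.symm y, ?_, by simp⟩
  exact h e.symm ⟨y, hy, rfl⟩

theorem TopIso.congr {M M' T : ModuleCat.{0} Λ} (h : TopIso Λ M T) (e : M ≃ₗ[Λ] M') :
    TopIso Λ M' T := by
  obtain ⟨a⟩ := h
  exact ⟨(Submodule.Quotient.equiv _ _ e (map_radical e)).symm.trans a⟩

theorem Indec.congr {M M' : ModuleCat.{0} Λ} (h : Indec Λ M) (e : M ≃ₗ[Λ] M') : Indec Λ M' := by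
  obtain ⟨h1, h2⟩ := h
  refine ⟨e.symm.toEquiv.nontrivial, fun A B hAB => ?_⟩
  have := h2 _ _ ((Submodule.orderIsoMapComap e.symm).isCompl_iff.1 hAB)
  simpa using this

end uniserial


variable {R : Type} [CommRing R] [Algebra R Λ] (pres : CyclicNakayama R Λ)

namespace CyclicNakayama

include pres in
theorem isArtinianRing : IsArtinianRing Λ :=
  have := pres.artinianBase
  have := pres.finiteAlgebra
  IsArtinianRing.of_finite R Λ

instance : NeZero pres.N := ⟨by have := pres.three_le_N; omega⟩

theorem S_nontrivial (i) : Nontrivial (pres.S i) := by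
  have := pres.S_simple i
  exact IsSimpleModule.nontrivial Λ _

theorem P_indec (i) : Indec Λ (pres.P i) := by
  have := pres.S_simple i
  have := pres.S_nontrivial i
  obtain ⟨f, hP, hs, hk⟩ := pres.P_cover i
  have hco : IsCoatom (LinearMap.ker f) := LinearMap.isCoatom_ker_of_surjective hs
  refine ⟨hs.nontrivial, fun A B hAB => ?_⟩
  have key : ∀ A : Submodule Λ (pres.P i), A = ⊤ ∨ A ≤ LinearMap.ker f := by
    intro A
    by_cases h : A ≤ LinearMap.ker f
    · exact .inr h
    · exact .inl (hk A (hco.2 _ (right_lt_sup.2 h)))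
  rcases key A with rfl | hA
  · right; simpa using hAB.disjoint
  · rcases key B with rfl | hB
    · left; simpa using hAB.disjoint
    · exact absurd (eq_top_iff.2 (hAB.sup_eq_top ▸ sup_le hA hB)) hco.1

theorem P_uniserial (i) : IsUniserial Λ (pres.P i) :=
  pres.nakayama _ (pres.P_finite i) (pres.P_indec i)

theorem P_top (i) : TopIso Λ (pres.P i) (pres.S i) := by
  have := pres.S_simple i
  obtain ⟨f, hP, hs, hk⟩ := pres.P_cover i
  have hco : IsCoatom (LinearMap.ker f) := LinearMap.isCoatom_ker_of_surjective hs
  have hr := (pres.P_uniserial i).isCoatom_radical (pres.P_indec i).1 (pres.P_finite i)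
  have : LinearMap.ker f = radical Λ (pres.P i) :=
    ((hco.le_iff.1 (le_radical hco.1)).resolve_left hr.1).symm
  exact ⟨this ▸ f.quotKerEquivOfSurjective hs⟩

theorem length_P (i) : Module.length Λ (pres.P i) = pres.c i := by
  obtain ⟨s, h1, h2, h3⟩ := pres.P_length i
  rw [← Module.length_compositionSeries s h1 h2, h3]

theorem exists_top {M : ModuleCat.{0} Λ} (hfg : Module.Finite Λ M) (hi : Indec Λ M) :
    ∃ i, TopIso Λ M (pres.S i) := by
  have hco := (pres.nakayama M hfg hi).isCoatom_radical hi.1 hfg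
  obtain ⟨i, ⟨e⟩⟩ := pres.S_complete (ModuleCat.of Λ (M ⧸ radical Λ M))
    (isSimpleModule_iff_isCoatom.2 hco)
  exact ⟨i, ⟨e⟩⟩

theorem top_unique {M : ModuleCat.{0} Λ} {i j} (hi : TopIso Λ M (pres.S i))
    (hj : TopIso Λ M (pres.S j)) : i = j := by
  obtain ⟨a⟩ := hi
  obtain ⟨b⟩ := hj
  exact pres.S_distinct i j ⟨a.symm.trans b⟩

theorem exists_cover {M : ModuleCat.{0} Λ} {i} (ht : TopIso Λ M (pres.S i)) :
    ∃ g : pres.P i →ₗ[Λ] M, Function.Surjective g := by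
  have := pres.S_nontrivial i
  obtain ⟨f, hP, hs, hk⟩ := pres.P_cover i
  obtain ⟨a⟩ := ht
  obtain ⟨g, hg⟩ := Module.projective_lifting_property
    (a.toLinearMap ∘ₗ (radical Λ M).mkQ) f (a.surjective.comp (Submodule.mkQ_surjective _))
  refine ⟨g, ?_⟩
  by_contra h
  have hr : LinearMap.range g ≤ radical Λ M := le_radical fun h' => h (LinearMap.range_eq_top.1 h')
  obtain ⟨y, hy⟩ := exists_ne (0 : pres.S i)
  obtain ⟨x, rfl⟩ := hs y
  apply hy
  rw [← hg]
  change a ((radical Λ M).mkQ (g x)) = 0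
  rw [Submodule.mkQ_apply, (Submodule.Quotient.mk_eq_zero _).2 (hr ⟨x, rfl⟩), map_zero]

theorem isProjCover {M : ModuleCat.{0} Λ} (hM : Nontrivial M) {i} (g : pres.P i →ₗ[Λ] M)
    (hg : Function.Surjective g) : IsProjCover Λ g := by
  refine ⟨pres.P_projective i, hg, fun A hA => ?_⟩
  rcases pres.P_uniserial i A (LinearMap.ker g) with h | h
  · rw [sup_eq_right.2 h] at hA
    obtain ⟨y, hy⟩ := exists_ne (0 : M)
    obtain ⟨x, rfl⟩ := hg y
    exact absurd (hA ▸ Submodule.mem_top : x ∈ LinearMap.ker g) hy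
  · rwa [sup_eq_left.2 h] at hA

theorem length_ker {M : ModuleCat.{0} Λ} {i} (g : pres.P i →ₗ[Λ] M)
    (hg : Function.Surjective g) :
    Module.length Λ (pres.P i) = Module.length Λ (LinearMap.ker g) + Module.length Λ M :=
  Module.length_eq_add_of_exact (LinearMap.ker g).subtype g (Submodule.subtype_injective _) hg
    (LinearMap.exact_subtype_ker_map g)

/-- A submodule of a uniserial module of finite length is determined by its length. -/
theorem _root_.PhiDim.IsUniserial.eq_of_length {M : ModuleCat.{0} Λ} (hu : IsUniserial Λ M)
    [IsArtinianRing Λ] (hfg : Module.Finite Λ M) {A B : Submodule Λ M}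
    (h : Module.length Λ A = Module.length Λ B) : A = B := by
  rw [Module.length_submodule, Module.length_submodule] at h
  rcases hu A B with h' | h'
  · exact h'.eq_of_not_lt fun hlt => (Submodule.height_strictMono hlt).ne h
  · exact (h'.eq_of_not_lt fun hlt => (Submodule.height_strictMono hlt).ne h.symm).symm

/-- A module with simple top is determined by its top and its length, being the quotient of
`P i` by the unique submodule of the complementary length. -/
theorem iso_of_top_length {M M' : ModuleCat.{0} Λ} {i} (ht : TopIso Λ M (pres.S i))
    (ht' : TopIso Λ M' (pres.S i)) {l : ℕ} (hl : Module.length Λ M = l)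
    (hl' : Module.length Λ M' = l) : Nonempty (M ≃ₗ[Λ] M') := by
  have := pres.isArtinianRing
  obtain ⟨g, hg⟩ := pres.exists_cover ht
  obtain ⟨g', hg'⟩ := pres.exists_cover ht'
  have h1 := pres.length_ker g hg
  rw [pres.length_ker g' hg', hl, hl'] at h1
  have h2 := (pres.P_uniserial i).eq_of_length (pres.P_finite i)
    (ENat.add_left_injective_of_ne_top (ENat.natCast_ne_top l) h1)
  exact ⟨(g.quotKerEquivOfSurjective hg).symm.trans
    ((Submodule.quotEquivOfEq _ _ h2.symm).trans (g'.quotKerEquivOfSurjective hg'))⟩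

theorem length_le {M : ModuleCat.{0} Λ} {i} (ht : TopIso Λ M (pres.S i)) :
    Module.length Λ M ≤ pres.c i := by
  obtain ⟨g, hg⟩ := pres.exists_cover ht
  exact (Module.length_le_of_surjective g hg).trans_eq (pres.length_P i)

theorem projective_iff {M : ModuleCat.{0} Λ} (hi : Indec Λ M) {i} (ht : TopIso Λ M (pres.S i)) :
    Module.Projective Λ M ↔ Module.length Λ M = pres.c i := by
  constructor
  · intro hP
    obtain ⟨g, hg⟩ := pres.exists_cover ht
    have := pres.isProjCover hi.1 g hg
    have h0 := subsingleton_of_isSyzygy (Y := ModuleCat.of Λ (LinearMap.ker g)) hP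
      ⟨_, g, this, ⟨LinearEquiv.refl _ _⟩⟩
    have h1 := pres.length_ker g hg
    rw [pres.length_P, Module.length_eq_zero_iff.2 h0, zero_add] at h1
    exact h1.symm
  · intro hl
    obtain ⟨e⟩ := pres.iso_of_top_length ht (pres.P_top i) hl (pres.length_P i)
    have := pres.P_projective i
    exact Module.Projective.of_equiv e.symm

/-- In a uniserial module with top `S i`, the nonzero submodule of colength `k` has top
`S (i + k)`. -/
theorem top_submodule (k : ℕ) {M : ModuleCat.{0} Λ} (hfg : Module.Finite Λ M) (hu : IsUniserial Λ M)
    {i} (ht : TopIso Λ M (pres.S i)) (K : Submodule Λ M) (hK : Nontrivial K)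
    (hl : Module.length Λ M = Module.length Λ K + k) :
    TopIso Λ (ModuleCat.of Λ K) (pres.S (i + k)) := by
  have := pres.isArtinianRing
  induction k generalizing M i with
  | zero =>
    have hKt : K = ⊤ := hu.eq_of_length hfg (by rw [Module.length_top, hl]; simp)
    subst hKt
    simpa using TopIso.congr ht (M' := ModuleCat.of Λ (⊤ : Submodule Λ M)) Submodule.topEquiv.symm
  | succ k ih =>
    have hM : Nontrivial M := K.subtype_injective.nontrivial
    have hco := hu.isCoatom_radical hM hfg
    have hKt : K ≠ ⊤ := by
      rintro rfl
      rw [Module.length_top] at hl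
      have h2 : Module.length Λ M ≠ ⊤ := Module.length_ne_top
      lift Module.length Λ M to ℕ using h2 with n
      norm_cast at hl
      omega
    have hKr := le_radical hKt
    have hrb : radical Λ M ≠ ⊥ := fun h => by
      rw [h, le_bot_iff] at hKr
      rw [hKr] at hK
      exact not_subsingleton (⊥ : Submodule Λ M) inferInstance
    have hlr : Module.length Λ M = Module.length Λ (radical Λ M) + 1 := by
      have : IsSimpleModule Λ (M ⧸ radical Λ M) := isSimpleModule_iff_isCoatom.2 hco
      rw [← Module.length_eq_one (R := Λ) (M := M ⧸ radical Λ M)]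
      exact Module.length_eq_add_of_exact (radical Λ M).subtype (radical Λ M).mkQ
        (Submodule.subtype_injective _) (Submodule.mkQ_surjective _) (LinearMap.exact_subtype_mkQ _)
    have e : (K.comap (radical Λ M).subtype) ≃ₗ[Λ] K := Submodule.comapSubtypeEquivOfLe hKr
    have := ih (M := ModuleCat.of Λ (radical Λ M)) (i := i + 1)
      (inferInstanceAs (Module.Finite Λ (radical Λ M)))
      (hu.of_injective (radical Λ M).subtype (Submodule.subtype_injective _))
      (pres.layer M hfg (hu.indec hM) i ht hrb) (K.comap (radical Λ M).subtype)
      e.toEquiv.nontrivial (by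
        rw [e.length_eq]
        rw [hlr] at hl
        push_cast at hl
        rw [← add_assoc] at hl
        exact ENat.add_left_injective_of_ne_top ENat.one_ne_top hl)
    have h3 := TopIso.congr this (M' := ModuleCat.of Λ K) e
    have h4 : i + 1 + (k : ZMod pres.N) = i + ((k + 1 : ℕ) : ZMod pres.N) := by push_cast; ring
    rwa [h4] at h3

/-- The radical of `P i` has top `S (i + 1)`, hence is a quotient of `P (i + 1)`. -/
theorem c_le (i) : pres.c i ≤ pres.c (i + 1) + 1 := by
  have := pres.isArtinianRing
  have hfg := pres.P_finite i
  have hu := pres.P_uniserial i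
  have hco := hu.isCoatom_radical (pres.P_indec i).1 hfg
  have hlr : Module.length Λ (pres.P i) = Module.length Λ (radical Λ (pres.P i)) + (1 : ℕ) := by
    have : IsSimpleModule Λ (pres.P i ⧸ radical Λ (pres.P i)) := isSimpleModule_iff_isCoatom.2 hco
    rw [Nat.cast_one, ← Module.length_eq_one (R := Λ) (M := pres.P i ⧸ radical Λ (pres.P i))]
    exact Module.length_eq_add_of_exact (radical Λ _).subtype (radical Λ _).mkQ
      (Submodule.subtype_injective _) (Submodule.mkQ_surjective _) (LinearMap.exact_subtype_mkQ _)
  have hn : Nontrivial (radical Λ (pres.P i)) := by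
    by_contra h
    rw [not_nontrivial_iff_subsingleton, ← Module.length_eq_zero_iff (R := Λ)] at h
    rw [h, pres.length_P, zero_add, Nat.cast_inj] at hlr
    have := pres.two_le_c i
    omega
  have h1 := pres.length_le (pres.top_submodule 1 hfg hu (pres.P_top i) _ hn hlr)
  rw [Nat.cast_one] at h1
  have h2 : (pres.c i : ℕ∞) ≤ pres.c (i + 1) + 1 := by
    rw [← pres.length_P, hlr]
    push_cast
    gcongr
  exact_mod_cast h2

theorem exists_submodule_length [IsArtinianRing Λ] {M : Type} [AddCommGroup M] [Module Λ M]
    [Module.Finite Λ M] {n : ℕ} (hn : Module.length Λ M = n) {k : ℕ} (hk : k ≤ n) :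
    ∃ K : Submodule Λ M, Module.length Λ K = k := by
  induction hk using Nat.decreasingInduction with
  | self => exact ⟨⊤, by rw [Module.length_top, hn]⟩
  | of_succ k hk ih =>
    obtain ⟨K, hK⟩ := ih
    have : Nontrivial K := Module.length_pos_iff (R := Λ).1 (by rw [hK]; simp)
    obtain ⟨L, hL, -⟩ := (eq_top_or_exists_le_coatom (⊥ : Submodule Λ K)).resolve_left bot_ne_top
    have hlr : Module.length Λ K = Module.length Λ L + 1 := by
      have : IsSimpleModule Λ (K ⧸ L) := isSimpleModule_iff_isCoatom.2 hL
      rw [← Module.length_eq_one (R := Λ) (M := K ⧸ L)]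
      exact Module.length_eq_add_of_exact L.subtype L.mkQ
        (Submodule.subtype_injective _) (Submodule.mkQ_surjective _) (LinearMap.exact_subtype_mkQ _)
    refine ⟨L.map K.subtype, ?_⟩
    rw [← (Submodule.equivMapOfInjective K.subtype K.subtype_injective L).length_eq]
    rw [hK] at hlr
    push_cast at hlr
    exact (ENat.add_left_injective_of_ne_top ENat.one_ne_top hlr).symm

end CyclicNakayama

/-! ### Modules and states -/

namespace CyclicNakayama

/-- `M` is a finitely generated module represented by the state `s`: projective for `none`, and
indecomposable with the prescribed top and length otherwise. -/
def HasState (M : ModuleCat.{0} Λ) : State pres.c → Prop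
  | none => Module.Finite Λ M ∧ Module.Projective Λ M
  | some v => Module.Finite Λ M ∧ Indec Λ M ∧ TopIso Λ M (pres.S v.1.1) ∧
      Module.length Λ M = v.1.2

variable {pres}

theorem HasState.finite {M : ModuleCat.{0} Λ} {s} (h : pres.HasState M s) :
    Module.Finite Λ M := by
  cases s <;> exact h.1

theorem hasState_pack {M : ModuleCat.{0} Λ} (hfg : Module.Finite Λ M) (hi : Indec Λ M) {i}
    (ht : TopIso Λ M (pres.S i)) {l : ℕ} (hl : Module.length Λ M = l) :
    pres.HasState M (pack pres.c i l) := by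
  have hle := pres.length_le ht
  have hpos : 0 < l := by
    have := hi.1
    have := Module.length_pos (R := Λ) (M := M)
    rw [hl] at this
    exact_mod_cast this
  rw [hl, Nat.cast_le] at hle
  unfold pack
  split_ifs with h
  · exact ⟨hfg, hi, ht, hl⟩
  · refine ⟨hfg, (pres.projective_iff hi ht).2 ?_⟩
    rw [hl, Nat.cast_inj]
    omega

theorem exists_hasState {M : ModuleCat.{0} Λ} (hfg : Module.Finite Λ M) (hi : Indec Λ M) :
    ∃ s, pres.HasState M s := by
  have := pres.isArtinianRing
  obtain ⟨i, ht⟩ := pres.exists_top hfg hi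
  have hl : Module.length Λ M ≠ ⊤ := Module.length_ne_top
  obtain ⟨l, hl⟩ := ENat.ne_top_iff_exists.1 hl
  exact ⟨_, hasState_pack hfg hi ht hl.symm⟩

theorem HasState.congr {M M' : ModuleCat.{0} Λ} {s} (h : pres.HasState M s) (e : M ≃ₗ[Λ] M') :
    pres.HasState M' s := by
  have := h.finite
  have hfg := Module.Finite.equiv e
  cases s with
  | none =>
    have := h.2
    exact ⟨hfg, Module.Projective.of_equiv e⟩
  | some v => exact ⟨hfg, h.2.1.congr e, h.2.2.1.congr e, by rw [← e.length_eq, h.2.2.2]⟩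

/-- The syzygy of modules is described by `step` on states. -/
theorem HasState.exists_syzygy {M : ModuleCat.{0} Λ} {s} (h : pres.HasState M s) :
    ∃ Y, IsSyzygy Λ Y M ∧ pres.HasState Y (step pres.c s) := by
  have := pres.isArtinianRing
  cases s with
  | none =>
    have hz := isSyzygy_of_projective h.2
    have := subsingleton_of_isSyzygy h.2 hz
    exact ⟨_, hz, inferInstance, inferInstance⟩
  | some v =>
    obtain ⟨⟨i, l⟩, hl0, hlc⟩ := v
    obtain ⟨hfg, hi, ht, hl⟩ := h
    dsimp only at hl0 hlc ht hl
    obtain ⟨g, hg⟩ := pres.exists_cover ht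
    have hP := pres.P_finite i
    have hlen : Module.length Λ (pres.P i) = Module.length Λ (LinearMap.ker g) + l := by
      rw [pres.length_ker g hg, hl]
    have hlk : Module.length Λ (LinearMap.ker g) = (pres.c i - l : ℕ) := by
      refine ENat.add_left_injective_of_ne_top (ENat.natCast_ne_top l) ?_
      dsimp only
      rw [← hlen, pres.length_P]
      norm_cast
      omega
    have hn : Nontrivial (LinearMap.ker g) := by
      rw [← Module.length_pos_iff (R := Λ), hlk]
      norm_cast
      omega
    refine ⟨ModuleCat.of Λ (LinearMap.ker g), ⟨_, g, pres.isProjCover hi.1 g hg,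
      ⟨LinearEquiv.refl _ _⟩⟩, ?_⟩
    refine hasState_pack (inferInstanceAs (Module.Finite Λ (LinearMap.ker g))) ?_ ?_ hlk
    · exact ((pres.P_uniserial i).of_injective (LinearMap.ker g).subtype
        (Submodule.subtype_injective _)).indec hn
    · exact pres.top_submodule l hP (pres.P_uniserial i) (pres.P_top i) _ hn hlen

theorem HasState.syzygy {M Y : ModuleCat.{0} Λ} {s} (h : pres.HasState M s)
    (hY : IsSyzygy Λ Y M) : pres.HasState Y (step pres.c s) := by
  obtain ⟨Y', hY', hs⟩ := h.exists_syzygy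
  obtain ⟨e⟩ := hY'.unique hY (LinearEquiv.refl _ _)
  exact hs.congr e

theorem HasState.nthSyzygy (n : ℕ) {M Y : ModuleCat.{0} Λ} {s} (h : pres.HasState M s)
    (hY : IsNthSyzygy Λ n Y M) : pres.HasState Y ((step pres.c)^[n] s) := by
  induction n generalizing M s with
  | zero => exact h.congr hY.some.symm
  | succ n ih =>
    obtain ⟨Z, hZ, hY⟩ := hY
    exact ih (h.syzygy hZ) hY

theorem HasState.exists_nthSyzygy (n : ℕ) {M : ModuleCat.{0} Λ} {s} (h : pres.HasState M s) :
    ∃ Y, IsNthSyzygy Λ n Y M := by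
  induction n generalizing M s with
  | zero => exact ⟨M, ⟨LinearEquiv.refl _ _⟩⟩
  | succ n ih =>
    obtain ⟨Z, hZ, hs⟩ := h.exists_syzygy
    obtain ⟨Y, hY⟩ := ih hs
    exact ⟨Y, Z, hZ, hY⟩

theorem HasState.iso {M M' : ModuleCat.{0} Λ} {v} (h : pres.HasState M (some v))
    (h' : pres.HasState M' (some v)) : Nonempty (M ≃ₗ[Λ] M') :=
  pres.iso_of_top_length h.2.2.1 h'.2.2.1 h.2.2.2 h'.2.2.2

theorem HasState.unique {M : ModuleCat.{0} Λ} {v w} (h : pres.HasState M (some v))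
    (h' : pres.HasState M (some w)) : v = w := by
  have h1 := pres.top_unique h.2.2.1 h'.2.2.1
  have h2 := h.2.2.2
  rw [h'.2.2.2, Nat.cast_inj] at h2
  exact Subtype.ext (Prod.ext h1 h2.symm)

theorem HasState.not_projective {M : ModuleCat.{0} Λ} {v} (h : pres.HasState M (some v)) :
    ¬ Module.Projective Λ M := by
  rw [pres.projective_iff h.2.1 h.2.2.1, h.2.2.2, Nat.cast_inj]
  exact v.2.2.ne

variable (pres) in
theorem exists_module (v) : ∃ M, pres.HasState M (some v) := by
  have := pres.isArtinianRing
  obtain ⟨⟨i, l⟩, hl0, hlc⟩ := v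
  dsimp only at hl0 hlc
  have hP := pres.P_finite i
  obtain ⟨K, hK⟩ := exists_submodule_length (pres.length_P i) (Nat.sub_le (pres.c i) l)
  have hl : Module.length Λ (pres.P i ⧸ K) = l := by
    have h := Module.length_eq_add_of_exact K.subtype K.mkQ
        (Submodule.subtype_injective _) (Submodule.mkQ_surjective _) (LinearMap.exact_subtype_mkQ _)
    rw [hK, pres.length_P] at h
    refine ENat.add_right_injective_of_ne_top (ENat.natCast_ne_top (pres.c i - l)) ?_
    dsimp only
    rw [← h]
    norm_cast
    omega
  have hn : Nontrivial (pres.P i ⧸ K) := by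
    rw [← Module.length_pos_iff (R := Λ), hl]
    exact_mod_cast hl0
  have hfg : Module.Finite Λ (pres.P i ⧸ K) := inferInstance
  have hi : Indec Λ (ModuleCat.of Λ (pres.P i ⧸ K)) :=
    ((pres.P_uniserial i).of_surjective K.mkQ K.mkQ_surjective).indec hn
  refine ⟨ModuleCat.of Λ (pres.P i ⧸ K), hfg, hi, ?_, hl⟩
  obtain ⟨j, hj⟩ := pres.exists_top hfg hi
  obtain ⟨a⟩ := hj
  have hj' : TopIso Λ (pres.P i) (pres.S j) := by
    have hr := (pres.P_uniserial i).isCoatom_radical (pres.P_indec i).1 hP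
    have hco := ((pres.P_uniserial i).of_surjective (M' := ModuleCat.of Λ (pres.P i ⧸ K))
      K.mkQ K.mkQ_surjective).isCoatom_radical hn hfg
    have hS := pres.S_simple j
    let f : pres.P i →ₗ[Λ] pres.S j :=
      a.toLinearMap ∘ₗ (radical Λ (pres.P i ⧸ K)).mkQ ∘ₗ K.mkQ
    have hf : Function.Surjective f :=
      a.surjective.comp ((Submodule.mkQ_surjective _).comp (Submodule.mkQ_surjective _))
    have hk : IsCoatom (LinearMap.ker f) := LinearMap.isCoatom_ker_of_surjective hf
    have : LinearMap.ker f = radical Λ (pres.P i) :=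
      ((hk.le_iff.1 (le_radical hk.1)).resolve_left hr.1).symm
    exact ⟨this ▸ f.quotKerEquivOfSurjective hf⟩
  have hij := pres.top_unique (pres.P_top i) hj'
  have ha : TopIso Λ (ModuleCat.of Λ (pres.P i ⧸ K)) (pres.S j) := ⟨a⟩
  rwa [← hij] at ha

/-- If the syzygy kills every state after `n` steps, then every finitely generated module has
projective dimension at most `n`; decomposable modules are handled by induction on length. -/
theorem pdimLE_of_finite {n : ℕ} (hn : ∀ s, (step pres.c)^[n] s = none) :
    GlobalDimLE Λ n := by
  have := pres.isArtinianRing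
  intro M hfg
  obtain ⟨l, hl⟩ := ENat.ne_top_iff_exists.1 (Module.length_ne_top (R := Λ) (M := M))
  induction l using Nat.strong_induction_on generalizing M with
  | _ l ih =>
  by_cases hs : ∃ s, pres.HasState M s
  · obtain ⟨s, hs⟩ := hs
    obtain ⟨Y, hY⟩ := hs.exists_nthSyzygy n
    have h := hs.nthSyzygy n hY
    rw [hn] at h
    exact ⟨Y, hY, h.2⟩
  · have hnt : Nontrivial M := by
      by_contra h
      rw [not_nontrivial_iff_subsingleton] at h
      exact hs ⟨none, hfg, Module.Projective.of_free (P := M) (R := Λ)⟩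
    have hi : ¬ Indec Λ M := fun hi => hs (exists_hasState hfg hi)
    simp only [Indec, hnt, true_and, not_forall, not_or] at hi
    obtain ⟨A, B, hAB, hA, hB⟩ := hi
    have hA' : A ≠ ⊤ := by
      rintro rfl
      exact hB (by simpa using hAB.disjoint)
    have hB' : B ≠ ⊤ := by
      rintro rfl
      exact hA (by simpa using hAB.disjoint)
    have key : ∀ C : Submodule Λ M, C ≠ ⊤ → PdimLE Λ (ModuleCat.of Λ C) n := by
      intro C hC
      have h1 := Submodule.length_lt hC
      obtain ⟨k, hk⟩ := ENat.ne_top_iff_exists.1 (h1.ne_top)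
      rw [← hl, ← hk, Nat.cast_lt] at h1
      exact ih k h1 (ModuleCat.of Λ C) (inferInstanceAs (Module.Finite Λ C)) hk
    obtain ⟨Y, hY, hp⟩ := key A hA'
    obtain ⟨Y', hY', hp'⟩ := key B hB'
    refine ⟨ModuleCat.of Λ (Y × Y'), isNthSyzygy_iso (hY.prod hY')
      (Submodule.prodEquivOfIsCompl A B hAB), ?_⟩
    exact inferInstanceAs (Module.Projective Λ (Y × Y'))

end CyclicNakayama

/-! ### Multiplicities as functions on the Grothendieck group -/

section mult
variable (X : ModuleCat.{0} Λ)

/-- `h : X → M` is a radical map: no `g ∘ h` is an automorphism of `X`, i.e. `h` is not a split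
monomorphism. -/
def IsRadHom {M : Type} [AddCommGroup M] [Module Λ M] (h : X →ₗ[Λ] M) : Prop :=
  ∀ g : M →ₗ[Λ] X, ¬ Function.Bijective (g ∘ₗ h)

/-- The submodule of `M` generated by the images of the maps `X → M` with property `p`. -/
def homTrace (p : ∀ (M : Type) [AddCommGroup M] [Module Λ M], (X →ₗ[Λ] M) → Prop)
    (M : Type) [AddCommGroup M] [Module Λ M] : Submodule Λ M :=
  ⨆ h : {h : X →ₗ[Λ] M // p M h}, LinearMap.range h.1

variable {X} in
/-- The length of `homTrace` is additive when `p` is stable under postcomposition. -/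
theorem homTrace_prod {p : ∀ (M : Type) [AddCommGroup M] [Module Λ M], (X →ₗ[Λ] M) → Prop}
    (hp : ∀ (M M' : Type) [AddCommGroup M] [Module Λ M] [AddCommGroup M'] [Module Λ M']
      (h : X →ₗ[Λ] M) (k : M →ₗ[Λ] M'), p M h → p M' (k ∘ₗ h))
    {A B C : Type} [AddCommGroup A] [Module Λ A] [AddCommGroup B] [Module Λ B]
    [AddCommGroup C] [Module Λ C] (e : C ≃ₗ[Λ] A × B) :
    Module.length Λ (homTrace X p C) =
      Module.length Λ (homTrace X p A) + Module.length Λ (homTrace X p B) := by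
  have hmap : ∀ {M M' : Type} [AddCommGroup M] [Module Λ M] [AddCommGroup M'] [Module Λ M']
      (k : M →ₗ[Λ] M'), homTrace X p M ≤ (homTrace X p M').comap k := by
    intro M M' _ _ _ _ k
    refine iSup_le fun h => ?_
    rintro _ ⟨x, rfl⟩
    exact (le_iSup (fun h : {h : X →ₗ[Λ] M' // p M' h} => LinearMap.range h.1)
      ⟨k ∘ₗ h.1, hp _ _ _ _ h.2⟩) ⟨x, rfl⟩
  have h : (homTrace X p C).map e.toLinearMap = (homTrace X p A).prod (homTrace X p B) := by
    apply le_antisymm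
    · rintro _ ⟨x, hx, rfl⟩
      exact ⟨hmap (LinearMap.fst Λ A B ∘ₗ e.toLinearMap) hx,
        hmap (LinearMap.snd Λ A B ∘ₗ e.toLinearMap) hx⟩
    · rintro ⟨a, b⟩ ⟨ha, hb⟩
      refine ⟨e.symm (a, b), ?_, by simp⟩
      have h1 : e.symm (a, 0) ∈ homTrace X p C :=
        hmap (e.symm.toLinearMap ∘ₗ LinearMap.inl Λ A B) ha
      have h2 : e.symm (0, b) ∈ homTrace X p C :=
        hmap (e.symm.toLinearMap ∘ₗ LinearMap.inr Λ A B) hb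
      have h3 := add_mem h1 h2
      rw [← map_add] at h3
      simpa using h3
  have h4 := (e.submoduleMap (homTrace X p C)).length_eq
  have h5 := (submoduleProdEquiv (homTrace X p A) (homTrace X p B)).length_eq
  rw [← h, Module.length_prod] at h5
  exact h4.trans h5

/-- The difference of the lengths of the trace and of the radical trace of `X` in `M`, a
multiple of the multiplicity of `X` as a direct summand of `M`. Both lengths are finite for
finitely generated modules over an artinian ring; otherwise `ENat.toNat` may return the junk
value `0`. -/
def mult (M : Type) [AddCommGroup M] [Module Λ M] : ℤ :=
  (Module.length Λ (homTrace X (fun _ _ _ _ => True) M)).toNat -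
    (Module.length Λ (homTrace X (fun _ _ _ => IsRadHom X) M)).toNat

theorem mult_prod [IsArtinianRing Λ] {A B C : Type} [AddCommGroup A] [Module Λ A]
    [AddCommGroup B] [Module Λ B] [AddCommGroup C] [Module Λ C] [Module.Finite Λ A]
    [Module.Finite Λ B] (e : C ≃ₗ[Λ] A × B) : mult X C = mult X A + mult X B := by
  unfold mult
  rw [homTrace_prod (fun _ _ _ _ _ _ _ _ _ => trivial) e, homTrace_prod ?_ e,
    ENat.toNat_add Module.length_ne_top Module.length_ne_top,
    ENat.toNat_add Module.length_ne_top Module.length_ne_top]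
  · push_cast; ring
  · intro M M' _ _ _ _ h k hh g
    exact hh (g ∘ₗ k)

theorem mult_eq_zero {M : Type} [AddCommGroup M] [Module Λ M] (h : ∀ h : X →ₗ[Λ] M, IsRadHom X h) :
    mult X M = 0 := by
  unfold mult
  have : homTrace X (fun _ _ _ _ => True) M = homTrace X (fun _ _ _ => IsRadHom X) M := by
    apply le_antisymm
    · exact iSup_le fun k => le_iSup (fun h : {h : X →ₗ[Λ] M // IsRadHom X h} =>
        LinearMap.range h.1) ⟨k.1, h k.1⟩
    · exact iSup_le fun k => le_iSup (fun h : {h : X →ₗ[Λ] M // True} =>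
        LinearMap.range h.1) ⟨k.1, trivial⟩
  rw [this, sub_self]

variable {X}

theorem mult_projective (hX : ¬ Module.Projective Λ X) {M : Type} [AddCommGroup M] [Module Λ M]
    (hM : Module.Projective Λ M) : mult X M = 0 := by
  refine mult_eq_zero X fun h g hgh => hX ?_
  let e := LinearEquiv.ofBijective (g ∘ₗ h) hgh
  refine Module.Projective.of_split h (e.symm.toLinearMap ∘ₗ g) ?_
  ext x
  exact e.symm_apply_apply x

theorem mult_indec (hX : Nontrivial X) {M : ModuleCat.{0} Λ} (hM : Indec Λ M)
    (hne : ¬ Nonempty (M ≃ₗ[Λ] X)) : mult X M = 0 := by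
  refine mult_eq_zero X fun h g hgh => ?_
  let e := LinearEquiv.ofBijective (g ∘ₗ h) hgh
  have hc : IsCompl (LinearMap.range h) (LinearMap.ker g) := by
    constructor
    · rw [Submodule.disjoint_def]
      rintro _ ⟨x, rfl⟩ hx
      have : x = 0 := hgh.1 (by rw [map_zero]; exact hx)
      rw [this, map_zero]
    · rw [codisjoint_iff, eq_top_iff]
      intro m _
      obtain ⟨x, hx⟩ := hgh.2 (g m)
      rw [← add_sub_cancel (h x) m]
      refine Submodule.add_mem_sup ⟨x, rfl⟩ ?_
      rw [LinearMap.mem_ker, map_sub, sub_eq_zero]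
      exact hx.symm
  rcases hM.2 _ _ hc with h0 | h0
  · obtain ⟨x, hx⟩ := exists_ne (0 : X)
    rw [LinearMap.range_eq_bot] at h0
    exact hx (hgh.1 (by simp [h0]))
  · exact hne ⟨LinearEquiv.ofBijective g ⟨LinearMap.ker_eq_bot.1 h0,
      fun y => (hgh.2 y).imp' h fun _ h => h⟩⟩

theorem mult_self_pos [IsArtinianRing Λ] (hX : Nontrivial X) (hu : IsUniserial Λ X)
    (hfg : Module.Finite Λ X) : 0 < mult X X := by
  have hco := hu.isCoatom_radical hX hfg
  have h1 : homTrace X (fun _ _ _ _ => True) X = ⊤ := by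
    rw [eq_top_iff]
    intro x _
    exact (le_iSup (fun h : {h : X →ₗ[Λ] X // True} => LinearMap.range h.1)
      ⟨LinearMap.id, trivial⟩) ⟨x, rfl⟩
  have h2 : homTrace X (fun _ _ _ => IsRadHom X) X ≤ radical Λ X := by
    refine iSup_le fun h => le_radical fun ht => h.2 LinearMap.id ?_
    have hs := LinearMap.range_eq_top.1 ht
    exact ⟨IsNoetherian.injective_of_surjective_endomorphism h.1 hs, hs⟩
  have h3 := Submodule.length_lt (ne_top_of_le_ne_top hco.1 h2)
  unfold mult
  rw [h1, Module.length_top, sub_pos, Nat.cast_lt]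
  rwa [← Nat.cast_lt (α := ℕ∞), ENat.natCast_toNat Module.length_ne_top,
    ENat.natCast_toNat Module.length_ne_top]

variable (X) in
/-- The function `mult X` as a homomorphism on `K0`. -/
def multHom [IsArtinianRing Λ] (hX : ¬ Module.Projective Λ X) : K0 Λ →+ ℤ :=
  QuotientAddGroup.lift (K0Rel Λ) (FreeAbelianGroup.lift fun M : FGMod Λ => mult X M.1) (by
    rw [K0Rel, AddSubgroup.closure_le]
    rintro _ (⟨A, B, C, ⟨e⟩, rfl⟩ | ⟨P, hP, rfl⟩)
    · have := A.2
      have := B.2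
      simp [mult_prod X e]
    · simp [mult_projective hX hP])

theorem multHom_classOf [IsArtinianRing Λ] (hX : ¬ Module.Projective Λ X) (M : FGMod Λ) :
    multHom X hX (classOf Λ M) = mult X M.1 := by
  change FreeAbelianGroup.lift (fun M : FGMod Λ => mult X M.1) (FreeAbelianGroup.of M) = _
  rw [FreeAbelianGroup.lift_apply_of]

end mult

theorem classOf_projective {M : FGMod Λ} (h : Module.Projective Λ M.1) : classOf Λ M = 0 :=
  (QuotientAddGroup.eq_zero_iff _).2 (AddSubgroup.subset_closure (.inr ⟨M, h, rfl⟩))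

theorem classOf_congr {M M' : FGMod Λ} (e : M.1 ≃ₗ[Λ] M'.1) : classOf Λ M = classOf Λ M' := by
  let Z : FGMod Λ := ⟨ModuleCat.of Λ PUnit, inferInstanceAs (Module.Finite Λ PUnit)⟩
  have hZ : classOf Λ Z = 0 :=
    classOf_projective (inferInstanceAs (Module.Projective Λ PUnit))
  have h : FreeAbelianGroup.of M - FreeAbelianGroup.of M' - FreeAbelianGroup.of Z ∈ K0Rel Λ :=
    AddSubgroup.subset_closure (.inl ⟨M', Z, M,
      ⟨e.trans (LinearEquiv.prodUnique (R := Λ) (M := M'.1) (M₂ := PUnit)).symm⟩, rfl⟩)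
  have h2 : classOf Λ M - classOf Λ M' - classOf Λ Z = 0 := (QuotientAddGroup.eq_zero_iff _).2 h
  rw [hZ, sub_zero, sub_eq_zero] at h2
  exact h2

/-! ### Counting along a pointed map -/

/-- The number of elements of a set of states different from the base point `none`. -/
def cnt {α : Type} (T : Set (Option α)) : ℕ := {v | some v ∈ T}.ncard

theorem cnt_eq {α : Type} (T : Set (Option α)) : cnt T = (T \ {none}).ncard := by
  have : T \ {none} = some '' {v | some v ∈ T} := by
    ext (_ | v) <;> simp
  rw [this, Set.ncard_image_of_injective _ (Option.some_injective _), cnt]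

/-- On the image of `f^[d]`, consisting of periodic points, `f` is injective and fixes the base
point, so the count is constant from `d` on. -/
theorem cnt_iterate_eq {α : Type} [Finite α] {f : Option α → Option α} (hf : f none = none) {d : ℕ}
    (hd : ∀ s, f^[d] s ∈ periodicPts f) (A : Set (Option α)) (j : ℕ) :
    cnt (f^[d + j] '' A) = cnt (f^[d] '' A) := by
  have hinj : Set.InjOn f^[j] (periodicPts f) := (bijOn_periodicPts f).injOn.iterate
    (bijOn_periodicPts f).mapsTo j
  have h0 : none ∈ periodicPts f := mk_mem_periodicPts one_pos hf
  have hfix : f^[j] none = none := iterate_fixed hf j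
  have hs : f^[d] '' A ⊆ periodicPts f := by
    rintro _ ⟨x, _, rfl⟩
    exact hd x
  have : f^[d + j] '' A \ {none} = f^[j] '' (f^[d] '' A \ {none}) := by
    rw [Nat.add_comm, iterate_add, Set.image_comp]
    ext x
    constructor
    · rintro ⟨⟨y, hy, rfl⟩, hx⟩
      refine ⟨y, ⟨hy, ?_⟩, rfl⟩
      rintro rfl
      exact hx hfix
    · rintro ⟨y, ⟨hy, hy0⟩, rfl⟩
      refine ⟨⟨y, hy, rfl⟩, fun h => hy0 ?_⟩
      exact hinj (hs hy) h0 (h.trans hfix.symm)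
  rw [cnt_eq, cnt_eq, this, (hinj.mono (Set.sdiff_subset.trans hs)).ncard_image]

/-- If the transient of `f` has length exactly `d + 1`, take `v` with `f^[d] v` not periodic and,
when `f^[d + 1] v` is not the base point, a periodic `w` with `f^[d + 1] w = f^[d + 1] v`. The
last step either kills `f^[d] v` or merges it with `f^[d] w`, so it lowers the count. -/
theorem exists_cnt_lt {α : Type} [Finite α] {f : Option α → Option α} (hf : f none = none) {d : ℕ}
    (hd : ∀ s, f^[d + 1] s ∈ periodicPts f) (hne : ∃ s, f^[d] s ∉ periodicPts f) :
    ∃ v w, ∀ A : Set (Option α), some v ∈ A → some w ∈ A →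
      cnt (f^[d + 1] '' A) < cnt (f^[d] '' A) := by
  have h0 : none ∈ periodicPts f := mk_mem_periodicPts one_pos hf
  obtain ⟨s, hs⟩ := hne
  have key : ∃ y, y ≠ none ∧ (f^[d + 1] s ≠ none → f^[d + 1] y = f^[d + 1] s ∧ f^[d] y ≠ f^[d] s) ∧
      s ≠ none := by
    have hs0 : s ≠ none := by
      rintro rfl
      rw [iterate_fixed hf] at hs
      exact hs h0
    by_cases hw : f^[d + 1] s = none
    · exact ⟨s, hs0, fun h => absurd hw h, hs0⟩
    · obtain ⟨y, hy, hyw⟩ := ((bijOn_periodicPts f).surjOn.iterate (d + 1)) (hd s)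
      refine ⟨y, ?_, fun _ => ⟨hyw, fun h => hs ?_⟩, hs0⟩
      · rintro rfl
        rw [iterate_fixed hf] at hyw
        exact hw hyw.symm
      · rw [← h]
        exact (bijOn_periodicPts f).mapsTo.iterate d hy
  obtain ⟨y, hy0, hy, hs0⟩ := key
  obtain ⟨v, rfl⟩ := Option.ne_none_iff_exists'.1 hs0
  obtain ⟨w, rfl⟩ := Option.ne_none_iff_exists'.1 hy0
  refine ⟨v, w, fun A hv hw => ?_⟩
  rw [cnt_eq, cnt_eq]
  have hu : f^[d] (some v) ∈ f^[d] '' A \ {none} := by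
    refine ⟨⟨_, hv, rfl⟩, fun h => hs ?_⟩
    rw [Set.mem_singleton_iff] at h
    rwa [h]
  have hsub : f^[d + 1] '' A \ {none} ⊆ f '' ((f^[d] '' A \ {none}) \ {f^[d] (some v)}) := by
    rintro _ ⟨⟨x, hx, rfl⟩, hx0⟩
    by_cases hxu : f^[d] x = f^[d] (some v)
    · have h1 : f^[d + 1] x = f^[d + 1] (some v) := by
        rw [iterate_succ_apply', hxu, iterate_succ_apply']
      rw [h1] at hx0 ⊢
      obtain ⟨h2, h3⟩ := hy hx0
      refine ⟨f^[d] (some w), ⟨⟨⟨_, hw, rfl⟩, fun h => hx0 ?_⟩, h3⟩, ?_⟩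
      · rw [Set.mem_singleton_iff] at h ⊢
        rw [← h2, iterate_succ_apply', h, hf]
      · rw [← h2, iterate_succ_apply']
    · refine ⟨f^[d] x, ⟨⟨⟨x, hx, rfl⟩, fun h => hx0 ?_⟩, hxu⟩, (iterate_succ_apply' f d x).symm⟩
      rw [Set.mem_singleton_iff] at h ⊢
      rw [iterate_succ_apply', h, hf]
  exact ((Set.ncard_le_ncard hsub (Set.toFinite _)).trans (Set.ncard_image_le (Set.toFinite _))).trans_lt
    (Set.ncard_sdiff_singleton_lt_of_mem hu (Set.toFinite _))

/-! ### Ranks and the φ-dimension -/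

namespace CyclicNakayama

/-- A chosen module representing a nonprojective state. -/
def stateMod (v : {p : ZMod pres.N × ℕ // 0 < p.2 ∧ p.2 < pres.c p.1}) : FGMod Λ :=
  ⟨(pres.exists_module v).choose, (pres.exists_module v).choose_spec.finite⟩

theorem hasState_stateMod (v) : pres.HasState (pres.stateMod v).1 (some v) :=
  (pres.exists_module v).choose_spec

/-- The class in `K0` of the modules represented by a state. -/
def stateClass : State pres.c → K0 Λ
  | none => 0
  | some v => classOf Λ (pres.stateMod v)

variable {pres} in
theorem HasState.classOf_eq {Y : FGMod Λ} {s} (h : pres.HasState Y.1 s) :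
    classOf Λ Y = pres.stateClass s := by
  cases s with
  | none => exact classOf_projective h.2
  | some v =>
    obtain ⟨e⟩ := h.iso (pres.hasState_stateMod v)
    exact classOf_congr e

/-- The homomorphism `multHom X`, for `X` representing the state `v`, is nonzero on the class of
`v` and vanishes on all others. -/
theorem linearIndependent_stateMod :
    LinearIndependent ℤ fun v => classOf Λ (pres.stateMod v) := by
  have := pres.isArtinianRing
  rw [linearIndependent_iff']
  intro S g hg v hv
  have hs := pres.hasState_stateMod v
  have hX := hs.not_projective
  have h := congrArg (multHom (pres.stateMod v).1 hX) hg
  rw [map_sum, map_zero, Finset.sum_eq_single_of_mem v hv] at h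
  · rw [map_zsmul, multHom_classOf, smul_eq_mul, mul_eq_zero] at h
    exact h.resolve_right
      (mult_self_pos hs.2.1.1 (pres.nakayama _ hs.1 hs.2.1) hs.1).ne'
  · intro w _ hwv
    have hw := pres.hasState_stateMod w
    rw [map_zsmul, multHom_classOf, mult_indec hs.2.1.1 hw.2.1, smul_zero]
    rintro ⟨e⟩
    exact hwv ((hw.congr e).unique hs)

/-- The subgroup of `K0` generated by the classes of a set of states is free on the states in it
other than the base point. -/
theorem rank_closure_stateClass (T : Set (State pres.c)) :
    Module.rank ℤ (AddSubgroup.closure (pres.stateClass '' T)) = cnt T := by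
  have h1 : AddSubgroup.closure (pres.stateClass '' T) =
      (Submodule.span ℤ ((fun v => classOf Λ (pres.stateMod v)) '' {v | some v ∈ T})).toAddSubgroup := by
    rw [Submodule.span_int_eq_addSubgroupClosure]
    apply le_antisymm
    · rw [AddSubgroup.closure_le]
      rintro _ ⟨_ | v, hs, rfl⟩
      · exact zero_mem _
      · exact AddSubgroup.subset_closure ⟨v, hs, rfl⟩
    · apply AddSubgroup.closure_mono
      rintro _ ⟨v, hv, rfl⟩
      exact ⟨some v, hv, rfl⟩
  have hl := pres.linearIndependent_stateMod
  have h2 : Module.rank ℤ (AddSubgroup.closure (pres.stateClass '' T)) = Module.rank ℤ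
      (Submodule.span ℤ ((fun v => classOf Λ (pres.stateMod v)) '' {v | some v ∈ T})) := by
    rw [h1]
    rfl
  rw [h2, rank_span_set (hl.linearIndepOn_id.mono (Set.image_subset_range _ _)),
    ← Set.cast_ncard (Set.toFinite _), Set.ncard_image_of_injective _ hl.injective, cnt]

/-- The states of the indecomposable direct summands of `M`. -/
def summandStates (M : ModuleCat.{0} Λ) : Set (State pres.c) :=
  {s | ∃ X : ModuleCat.{0} Λ, Indec Λ X ∧ IsSummand Λ X M ∧ pres.HasState X s}

theorem finite_of_isSummand [IsArtinianRing Λ] {X M : ModuleCat.{0} Λ} (hM : Module.Finite Λ M)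
    (h : IsSummand Λ X M) : Module.Finite Λ X := by
  obtain ⟨A, B, hAB, ⟨e⟩⟩ := h
  have : Module.Finite Λ A := inferInstance
  exact Module.Finite.equiv e.symm

theorem addGens_eq {M : ModuleCat.{0} Λ} (hM : Module.Finite Λ M) (t : ℕ) :
    addGens Λ M t = pres.stateClass '' ((step pres.c)^[t] '' pres.summandStates M) := by
  have := pres.isArtinianRing
  ext k
  constructor
  · rintro ⟨X, hX, hXM, Y, hY, rfl⟩
    obtain ⟨s, hs⟩ := exists_hasState (pres := pres) (finite_of_isSummand hM hXM) hX
    exact ⟨_, ⟨s, ⟨X, hX, hXM, hs⟩, rfl⟩, (hs.nthSyzygy t hY).classOf_eq.symm⟩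
  · rintro ⟨_, ⟨s, ⟨X, hX, hXM, hs⟩, rfl⟩, rfl⟩
    obtain ⟨Y, hY⟩ := hs.exists_nthSyzygy t
    have h := hs.nthSyzygy t hY
    exact ⟨X, hX, hXM, ⟨Y, h.finite⟩, hY, (h.classOf_eq (Y := ⟨Y, h.finite⟩)).symm⟩

theorem syzygyRank_eq {M : ModuleCat.{0} Λ} (hM : Module.Finite Λ M) (t : ℕ) :
    syzygyRank Λ M t = cnt ((step pres.c)^[t] '' pres.summandStates M) := by
  rw [syzygyRank, pres.addGens_eq hM, rank_closure_stateClass]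

theorem isSummand_prod (X Y : ModuleCat.{0} Λ) :
    IsSummand Λ X (ModuleCat.of Λ (X × Y)) ∧ IsSummand Λ Y (ModuleCat.of Λ (X × Y)) := by
  have h : IsCompl (LinearMap.range (LinearMap.inl Λ X Y)) (LinearMap.range (LinearMap.inr Λ X Y)) :=
    LinearMap.isCompl_range_inl_inr
  exact ⟨⟨_, _, h, ⟨LinearEquiv.ofInjective _ LinearMap.inl_injective⟩⟩,
    ⟨_, _, h.symm, ⟨LinearEquiv.ofInjective _ LinearMap.inr_injective⟩⟩⟩

/-- The `φ`-dimension is the length of the transient of the syzygy on states. -/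
theorem phiDim_eq {d : ℕ} (hd : ∀ s, (step pres.c)^[d] s ∈ periodicPts (step pres.c))
    (hlt : ∀ n, n < d → ∃ s, (step pres.c)^[n] s ∉ periodicPts (step pres.c)) :
    phiDim Λ = d := by
  have hmem : ∀ M : FGMod Λ, d ∈ {t : ℕ | ∀ j : ℕ, 1 ≤ j →
      syzygyRank Λ M.1 (t + j) = syzygyRank Λ M.1 t} := by
    intro M j _
    rw [pres.syzygyRank_eq M.2, pres.syzygyRank_eq M.2, cnt_iterate_eq rfl hd]
  refine le_antisymm (iSup_le fun M => Nat.cast_le.2 (Nat.sInf_le (hmem M))) ?_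
  obtain _ | d := d
  · exact zero_le
  obtain ⟨v, w, h⟩ := exists_cnt_lt rfl hd (hlt d d.lt_succ_self)
  have hv := pres.hasState_stateMod v
  have hw := pres.hasState_stateMod w
  have := hv.finite
  have := hw.finite
  have hfin : Module.Finite Λ ((pres.stateMod v).1 × (pres.stateMod w).1) := inferInstance
  let M : FGMod Λ := ⟨ModuleCat.of Λ ((pres.stateMod v).1 × (pres.stateMod w).1), hfin⟩
  obtain ⟨h1, h2⟩ := isSummand_prod (pres.stateMod v).1 (pres.stateMod w).1
  have hlt := h (pres.summandStates M.1) ⟨_, hv.2.1, h1, hv⟩ ⟨_, hw.2.1, h2, hw⟩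
  refine le_iSup_of_le M (Nat.cast_le.2 ?_)
  by_contra! hphi
  have hs := Nat.sInf_mem ⟨_, hmem M⟩
  have e1 := hs (d + 1 - phi Λ M.1) (by omega)
  have e2 : syzygyRank Λ M.1 d = syzygyRank Λ M.1 (phi Λ M.1) := by
    obtain h0 | h0 := (Nat.lt_succ_iff.1 hphi).eq_or_lt
    · rw [h0]
    · have := hs (d - phi Λ M.1) (by omega)
      change syzygyRank Λ M.1 (phi Λ M.1 + _) = _ at this
      rw [Nat.add_sub_cancel' h0.le] at this
      exact this
  change syzygyRank Λ M.1 (phi Λ M.1 + _) = _ at e1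
  rw [Nat.add_sub_cancel' hphi.le] at e1
  have e3 := e1.trans e2.symm
  rw [pres.syzygyRank_eq M.2, pres.syzygyRank_eq M.2, Nat.cast_inj] at e3
  omega

end CyclicNakayama

end helpers

/-- **Theorem (A).** If `Λ` is a cyclic Nakayama artin algebra of infinite global
dimension, then `φdim Λ` is an even (in particular finite) number. -/
theorem phiDim_even {R Λ : Type} [CommRing R] [Ring Λ] [Algebra R Λ]
    (pres : CyclicNakayama R Λ) (hglob : HasInfiniteGlobalDim Λ) :
    ∃ m : ℕ, phiDim Λ = ((2 * m : ℕ) : ℕ∞) := by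
  obtain ⟨m, hm, hlt⟩ := even_transient (c := pres.c)
    (fun i => one_le_two.trans (pres.two_le_c i)) pres.c_le
    (fun ⟨_, hn⟩ => hglob ⟨_, CyclicNakayama.pdimLE_of_finite hn⟩)
  exact ⟨m, pres.phiDim_eq hm hlt⟩

end PhiDim
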